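/- Suppose ℝ² = U₁ ∪ U₂ ∪ C where U₁ (bounded) and U₂ (unbounded) are disjoint open connected sets, C = ∂U₁ = ∂U₂ is compact, and every point of C is accessible from both U₁ and U₂. If C can be written as the union of two arcs K⁽¹⁾ and K⁽²⁾ (each homeomorphic to [0,1]) intersecting exactly in their two common endpoints, then C is homeomorphic to the circle S¹, and consequently the closure of U₁ is homeomorphic to the closed 2-dimensional disk. -/

import Mathlib

/-- Accessibility of a boundary point from an open set. -/
def Accessible {X : Type*} [TopologicalSpace X] (U : Set X) (x : X) : Prop :=
  ∃ φ : unitInterval → X, Continuous φ ∧ Function.Injective φ ∧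
    (∀ t, φ t ∈ closure U) ∧ (∀ t : unitInterval, (t : ℝ) < 1 → φ t ∈ U) ∧ φ 1 = x

namespace PlaneTopology

open Set Filter Topology Metric Complex

/-- `g` has a continuous logarithm on `K`. -/
def HasLog (K : Set ℂ) (g : ℂ → ℂ) : Prop :=
  ∃ L : ℂ → ℂ, ContinuousOn L K ∧ ∀ z ∈ K, exp (L z) = g z

namespace HasLog

variable {K A B : Set ℂ} {g h : ℂ → ℂ}

lemma congr (hg : HasLog K g) (hgh : ∀ z ∈ K, g z = h z) : HasLog K h := by
  obtain ⟨L, hL, hexp⟩ := hg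
  exact ⟨L, hL, fun z hz => (hexp z hz).trans (hgh z hz)⟩

lemma mono (hg : HasLog B g) (hAB : A ⊆ B) : HasLog A g := by
  obtain ⟨L, hL, hexp⟩ := hg
  exact ⟨L, hL.mono hAB, fun z hz => hexp z (hAB hz)⟩

lemma mul (hg : HasLog K g) (hh : HasLog K h) : HasLog K (fun z => g z * h z) := by
  obtain ⟨L, hL, hexp⟩ := hg
  obtain ⟨M, hM, hexp'⟩ := hh
  exact ⟨fun z => L z + M z, hL.add hM, fun z hz => by
    simp only [exp_add, hexp z hz, hexp' z hz]⟩

lemma inv (hg : HasLog K g) : HasLog K (fun z => (g z)⁻¹) := by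
  obtain ⟨L, hL, hexp⟩ := hg
  exact ⟨fun z => -L z, hL.neg, fun z hz => by simp only [exp_neg, hexp z hz]⟩

lemma const {c : ℂ} (hc : c ≠ 0) : HasLog K (fun _ => c) :=
  ⟨fun _ => log c, continuousOn_const, fun _ _ => exp_log hc⟩

lemma of_norm_sub_one_lt (hg : ContinuousOn g K) (h1 : ∀ z ∈ K, ‖g z - 1‖ < 1) :
    HasLog K g := by
  have hs : ∀ z ∈ K, g z ∈ slitPlane := fun z hz => by
    have := mem_slitPlane_of_norm_lt_one (h1 z hz)
    simpa using this
  exact ⟨fun z => log (g z), hg.clog hs, fun z hz => exp_log (slitPlane_ne_zero (hs z hz))⟩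

end HasLog

lemma eq_of_exp_eq_one {S : Set ℂ} (hS : IsPreconnected S) {h : ℂ → ℂ} (hc : ContinuousOn h S)
    (h1 : ∀ z ∈ S, exp (h z) = 1) {x y : ℂ} (hx : x ∈ S) (hy : y ∈ S) : h x = h y := by
  set k : ℂ → ℝ := fun z => (h z).im / (2 * Real.pi) with hk
  have hkc : ContinuousOn k S := (continuous_im.comp_continuousOn hc).div_const _
  have key : ∀ z ∈ S, ∃ n : ℤ, h z = n * (2 * Real.pi * I) ∧ k z = n := by
    intro z hz
    obtain ⟨n, hn⟩ := exp_eq_one_iff.1 (h1 z hz)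
    refine ⟨n, hn, ?_⟩
    simp only [hk, hn]
    have : (2 * Real.pi) ≠ 0 := by positivity
    simp
  have hord := (hS.image k hkc).ordConnected
  have main : ∀ x ∈ S, ∀ y ∈ S, ¬ k x < k y := by
    intro x hx y hy hlt
    obtain ⟨n, -, hn⟩ := key x hx
    obtain ⟨m, -, hm⟩ := key y hy
    rw [hn, hm] at hlt
    have hnm : n + 1 ≤ m := by exact_mod_cast hlt
    have hnm' : (n : ℝ) + 1 ≤ m := by exact_mod_cast hnm
    have : (n : ℝ) + 1 / 2 ∈ k '' S :=
      hord.out (mem_image_of_mem k hx) (mem_image_of_mem k hy)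
        ⟨by rw [hn]; linarith, by rw [hm]; linarith⟩
    obtain ⟨z, hz, hzk⟩ := this
    obtain ⟨l, -, hl⟩ := key z hz
    rw [hl] at hzk
    have h2 : (2 * l : ℝ) = 2 * n + 1 := by linarith
    have h3 : (2 * l : ℤ) = 2 * n + 1 := by exact_mod_cast h2
    omega
  obtain ⟨n, hn, hn'⟩ := key x hx
  obtain ⟨m, hm, hm'⟩ := key y hy
  have hxy : k x = k y := le_antisymm (not_lt.1 (main y hy x hx)) (not_lt.1 (main x hx y hy))
  have : n = m := by
    rw [hn', hm'] at hxy
    exact_mod_cast hxy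
  rw [hn, hm, this]

lemma HasLog.union {A B : Set ℂ} {g : ℂ → ℂ} (hA : IsClosed A) (hB : IsClosed B)
    (hAB : IsPreconnected (A ∩ B)) (hgA : HasLog A g) (hgB : HasLog B g) :
    HasLog (A ∪ B) g := by
  classical
  obtain ⟨L, hL, hLe⟩ := hgA
  obtain ⟨M, hM, hMe⟩ := hgB
  obtain ⟨c, hc1, hc⟩ : ∃ c : ℂ, exp c = 1 ∧ ∀ z ∈ A ∩ B, L z - M z = c := by
    rcases (A ∩ B).eq_empty_or_nonempty with h0 | ⟨w, hw⟩
    · exact ⟨0, exp_zero, by simp [h0]⟩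
    have hone : ∀ z ∈ A ∩ B, exp (L z - M z) = 1 := fun z hz => by
      rw [exp_sub, hLe z hz.1, hMe z hz.2, div_self]
      rw [← hLe z hz.1]
      exact exp_ne_zero _
    exact ⟨L w - M w, hone w hw, fun z hz => eq_of_exp_eq_one hAB
      ((hL.mono inter_subset_left).sub (hM.mono inter_subset_right)) hone hz hw⟩
  set N : ℂ → ℂ := A.piecewise L (fun z => M z + c) with hN
  have hNA : EqOn N L A := piecewise_eqOn _ _ _
  have hNB : EqOn N (fun z => M z + c) B := by
    intro z hz
    by_cases hzA : z ∈ A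
    · rw [hNA hzA, ← hc z ⟨hzA, hz⟩]; ring
    · exact piecewise_eq_of_notMem _ _ _ hzA
  refine ⟨N, ContinuousOn.union_of_isClosed (hL.congr hNA)
    ((hM.add continuousOn_const).congr hNB) hA hB, ?_⟩
  rintro z (hz | hz)
  · rw [hNA hz, hLe z hz]
  · rw [hNB hz]
    simp only [exp_add, hc1, mul_one, hMe z hz]

/-- Moving a point `p` off a compact set `K` slightly does not change whether `z - p` has a
logarithm on `K`. -/
lemma eventually_hasLog_div {K : Set ℂ} (hK : IsCompact K) {p : ℂ} (hp : p ∉ K) :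
    ∀ᶠ q in 𝓝 p, HasLog K (fun z => (z - q) / (z - p)) := by
  rcases K.eq_empty_or_nonempty with rfl | hne
  · exact Eventually.of_forall fun q => ⟨fun _ => 0, by simp, by simp⟩
  have hd : 0 < infDist p K := (hK.isClosed.notMem_iff_infDist_pos hne).1 hp
  filter_upwards [ball_mem_nhds p hd] with q hq
  have hne0 : ∀ z ∈ K, z - p ≠ 0 := fun z hz h => hp (by rwa [← sub_eq_zero.1 h])
  refine HasLog.of_norm_sub_one_lt (ContinuousOn.div (by fun_prop) (by fun_prop) hne0) ?_
  intro z hz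
  have h0 := hne0 z hz
  have : (z - q) / (z - p) - 1 = (p - q) / (z - p) := by field_simp; ring
  rw [this, norm_div, div_lt_one (norm_pos_iff.2 h0)]
  calc ‖p - q‖ = dist q p := by rw [dist_comm, dist_eq_norm]
    _ < infDist p K := hq
    _ ≤ dist p z := infDist_le_dist_of_mem hz
    _ = ‖z - p‖ := by rw [dist_comm, dist_eq_norm]

lemma hasLog_div_of_isPreconnected {K V : Set ℂ} (hK : IsCompact K) (hV : IsPreconnected V)
    (hKV : Disjoint V K) {p q : ℂ} (hp : p ∈ V) (hq : q ∈ V) :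
    HasLog K (fun z => (z - p) / (z - q)) := by
  have hne : ∀ x ∈ V, ∀ z ∈ K, z - x ≠ 0 := fun x hx z hz h =>
    disjoint_left.1 hKV hx (by rwa [← sub_eq_zero.1 h])
  refine hV.induction₂ (fun x y => HasLog K (fun z => (z - x) / (z - y))) ?_ ?_ ?_ hp hq
  · intro x hx
    filter_upwards [nhdsWithin_le_nhds (eventually_hasLog_div hK (disjoint_left.1 hKV hx))]
      with y hy
    exact hy.inv.congr fun z _ => by simp
  · intro x y w hx hy hw h1 h2
    exact (h1.mul h2).congr fun z hz => div_mul_div_cancel₀ (hne y hy z hz)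
  · intro x y hx hy h
    exact h.inv.congr fun z _ => by simp

lemma hasLog_sub_of_convex {K : Set ℂ} {c : ℂ} {R : ℝ} (hK : K ⊆ closedBall c R) {p : ℂ}
    (hp : p ∉ closedBall c R) : HasLog K (fun z => z - p) := by
  have hcp : R < ‖c - p‖ := by
    rw [mem_closedBall, not_le, dist_comm, dist_eq_norm] at hp
    exact hp
  rcases K.eq_empty_or_nonempty with rfl | ⟨w, hw⟩
  · exact ⟨fun _ => 0, by simp, by simp⟩
  have hR : 0 ≤ R := dist_nonneg.trans (hK hw)
  have h0 : c - p ≠ 0 := norm_pos_iff.1 (hR.trans_lt hcp)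
  have h1 : HasLog K (fun z => (z - p) / (c - p)) := by
    refine HasLog.of_norm_sub_one_lt (by fun_prop) fun z hz => ?_
    have : (z - p) / (c - p) - 1 = (z - c) / (c - p) := by field_simp; ring
    rw [this, norm_div, div_lt_one (norm_pos_iff.2 h0), ← dist_eq_norm]
    exact lt_of_le_of_lt (hK hz) hcp
  exact ((HasLog.const h0).mul h1).congr fun z _ => by field_simp

lemma not_hasLog_sphere (p : ℂ) {R : ℝ} (hR : 0 < R) :
    ¬ HasLog (sphere p R) (fun z => z - p) := by
  rintro ⟨L, hL, hexp⟩
  have hmem : ∀ t : ℝ, circleMap p R t ∈ sphere p R := fun t =>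
    circleMap_mem_sphere p hR.le t
  have hc : Continuous fun t : ℝ => L (circleMap p R t) :=
    hL.comp_continuous (by fun_prop) hmem
  set h : ℂ → ℂ := fun z => L (circleMap p R z.re) - (Real.log R + z.re * I)
  have hh : Continuous h := by
    refine (hc.comp continuous_re).sub ?_
    fun_prop
  have h1 : ∀ z ∈ (univ : Set ℂ), exp (h z) = 1 := by
    intro z _
    have hR' : (R : ℂ) ≠ 0 := by exact_mod_cast hR.ne'
    simp only [h]
    rw [exp_sub, hexp _ (hmem _), exp_add, ← ofReal_exp, Real.exp_log hR]
    simp only [circleMap, add_sub_cancel_left]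
    exact div_self (mul_ne_zero hR' (exp_ne_zero _))
  have := eq_of_exp_eq_one isPreconnected_univ hh.continuousOn h1 (mem_univ 0)
    (mem_univ ((2 * Real.pi : ℝ) : ℂ))
  simp only [h, zero_re, ofReal_re] at this
  have hper : circleMap p R (2 * Real.pi) = circleMap p R 0 := by
    simp [circleMap]
  rw [hper] at this
  have h3 : ((2 * Real.pi : ℝ) : ℂ) * I = 0 := by
    have h4 := this
    simp only [ofReal_zero, zero_mul, add_zero] at h4
    linear_combination h4
  have h5 : (2 * Real.pi : ℝ) ≠ 0 := by positivity
  exact (mul_ne_zero (by exact_mod_cast h5) I_ne_zero) h3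

/-- If `(z - p) / (z - q)` has a logarithm on `K`, then no bounded open set whose frontier lies
in `K` separates `p` from `q`. -/
lemma not_hasLog_of_frontier_subset {K V : Set ℂ} (hK : IsClosed K)
    (hVb : Bornology.IsBounded V) (hVK : frontier V ⊆ K) {p q : ℂ} (hp : p ∈ V)
    (hq : q ∉ V) (hqK : q ∉ K) : ¬ HasLog K (fun z => (z - p) / (z - q)) := by
  classical
  rintro ⟨L, hL, hexp⟩
  obtain ⟨M, hM⟩ := ContinuousMap.exists_restrict_eq hK ⟨K.domRestrict L, hL.domRestrict⟩
  have hML : ∀ z ∈ K, M z = L z := fun z hz => DFunLike.congr_fun hM ⟨z, hz⟩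
  set F : ℂ → ℂ := V.piecewise (fun z => exp (M z) * (z - q)) (fun z => z - p) with hF
  have hFc : Continuous F := by
    refine Continuous.piecewise ?_ (by fun_prop) (by fun_prop)
    intro z hz
    have hzK := hVK hz
    have hzq : z - q ≠ 0 := fun h => hqK (by rwa [← sub_eq_zero.1 h])
    rw [hML z hzK, hexp z hzK]
    field_simp
  have hF0 : ∀ z, F z ≠ 0 := by
    intro z
    by_cases hz : z ∈ V
    · rw [hF, piecewise_eq_of_mem _ _ _ hz]
      exact mul_ne_zero (exp_ne_zero _) (sub_ne_zero.2 fun h => hq (h ▸ hz))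
    · rw [hF, piecewise_eq_of_notMem _ _ _ hz]
      exact sub_ne_zero.2 fun h => hz (h ▸ hp)
  have hsc : IsSimplyConnected (univ : Set ℂ) := by
    have : ContractibleSpace (univ : Set ℂ) := convex_univ.contractibleSpace univ_nonempty
    exact (inferInstance : SimplyConnectedSpace (univ : Set ℂ))
  obtain ⟨N, hN, hNe⟩ := exists_continuousOn_eqOn_exp_comp hsc isOpen_univ hFc.continuousOn
    (by rintro ⟨z, -, hz⟩; exact hF0 z hz)
  obtain ⟨R, hR0, hR⟩ : ∃ R, 0 < R ∧ V ⊆ ball p R := hVb.subset_ball_lt 0 p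
  refine not_hasLog_sphere p hR0 ⟨N, hN.mono (subset_univ _), fun z hz => ?_⟩
  have hzV : z ∉ V := fun h => by
    have := hR h
    rw [mem_ball] at this
    rw [mem_sphere] at hz
    linarith
  have := hNe (mem_univ z)
  simp only [Function.comp_apply] at this
  rw [this, hF, piecewise_eq_of_notMem _ _ _ hzV]

end PlaneTopology

namespace PlaneTopology

open Set Filter Topology Metric Complex

/-- The complement of `W` has no nonempty compact relatively open subset inside the unit disk. -/
def NoHoles (W : Set ℂ) : Prop :=
  ∀ Q ⊆ ball (0 : ℂ) 1, IsCompact Q → ∀ O, IsOpen O → Q = O ∩ Wᶜ → Q = ∅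

lemma NoHoles.hasLog {W K : Set ℂ} (hW : NoHoles W) (hW1 : W ⊆ ball 0 1)
    (hWo : IsOpen W) (hK : IsCompact K) (hKW : K ⊆ W) {w : ℂ} (hw : w ∉ W) :
    HasLog K (fun z => z - w) := by
  have hiff : ∀ p ∉ K, ∀ᶠ q in 𝓝 p, q ∉ K ∧
      (HasLog K (fun z => z - p) ↔ HasLog K (fun z => z - q)) := by
    intro p hp
    have hcl : IsOpen Kᶜ := hK.isClosed.isOpen_compl
    filter_upwards [eventually_hasLog_div hK hp, hcl.mem_nhds hp] with q hq hqK
    have hne : ∀ x ∉ K, ∀ z ∈ K, z - x ≠ 0 := fun x hx z hz h =>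
      hx (by rwa [← sub_eq_zero.1 h])
    refine ⟨hqK, fun h => (h.mul hq).congr fun z hz => ?_,
      fun h => (h.mul hq.inv).congr fun z hz => ?_⟩
    · have := hne p hp z hz
      field_simp
    · have := hne p hp z hz
      have := hne q hqK z hz
      field_simp
  obtain ⟨ρ, hρ⟩ : ∃ ρ, K ⊆ closedBall 0 ρ := hK.isBounded.subset_closedBall 0
  set V : Set ℂ := {p | p ∉ K ∧ ¬ HasLog K (fun z => z - p)} with hVdef
  have hVo : IsOpen V := by
    rw [isOpen_iff_mem_nhds]
    rintro p ⟨hp, hpl⟩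
    filter_upwards [hiff p hp] with q hq
    exact ⟨hq.1, fun h => hpl (hq.2.2 h)⟩
  have hKV : IsClosed (K ∪ V) := by
    rw [← isOpen_compl_iff, isOpen_iff_mem_nhds]
    intro p hp
    have hpK : p ∉ K := fun h => hp (Or.inl h)
    have hpl : HasLog K (fun z => z - p) := by
      by_contra h
      exact hp (Or.inr ⟨hpK, h⟩)
    filter_upwards [hiff p hpK] with q hq
    rintro (h | h)
    · exact hq.1 h
    · exact h.2 (hq.2.1 hpl)
  have hV1 : V ∩ Wᶜ ⊆ ball 0 1 := by
    rintro p ⟨⟨hpK, hpl⟩, hpW⟩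
    by_contra hp1
    rcases K.eq_empty_or_nonempty with rfl | hne
    · exact hpl ⟨fun _ => 0, by simp, by simp⟩
    obtain ⟨m, hm, hmax⟩ := hK.exists_isMaxOn hne (continuous_norm.continuousOn)
    refine hpl (hasLog_sub_of_convex (c := 0) (R := ‖m‖) (fun z hz => ?_) ?_)
    · simpa using hmax hz
    · have h1 := hW1 (hKW hm)
      simp only [mem_ball_zero_iff, mem_closedBall_zero_iff, not_lt, not_le] at *
      linarith
  by_contra hcon
  have hwV : w ∈ V ∩ Wᶜ := ⟨⟨fun h => hw (hKW h), hcon⟩, hw⟩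
  have hQ := hW (V ∩ Wᶜ) hV1 ?_ V hVo rfl
  · rw [hQ] at hwV
    exact hwV
  have hcb : V ⊆ closedBall 0 ρ := by
    intro p hp
    by_contra h
    exact hp.2 (hasLog_sub_of_convex hρ h)
  have heq : V ∩ Wᶜ = (K ∪ V) ∩ Wᶜ ∩ closedBall 0 ρ := by
    ext p
    constructor
    · rintro ⟨h1, h2⟩
      exact ⟨⟨Or.inr h1, h2⟩, hcb h1⟩
    · rintro ⟨⟨h1 | h1, h2⟩, -⟩
      · exact absurd (hKW h1) h2
      · exact ⟨h1, h2⟩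
  rw [heq]
  exact (isCompact_closedBall _ _).inter_left (hKV.inter hWo.isClosed_compl)

lemma NoHoles.image {W : Set ℂ} (hW : NoHoles W) {φ χ : ℂ → ℂ}
    (hφ : ContinuousOn φ (ball 0 1)) (hχ : ContinuousOn χ (ball 0 1))
    (hχm : MapsTo χ (ball 0 1) (ball 0 1))
    (hχφ : ∀ z ∈ ball (0 : ℂ) 1, χ (φ z) = z) (hφχ : ∀ z ∈ ball (0 : ℂ) 1, φ (χ z) = z)
    (hW1 : W ⊆ ball 0 1) : NoHoles (φ '' W) := by
  intro Q hQ1 hQ O hO hQO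
  have h := hW (χ '' Q) ?_ (hQ.image_of_continuousOn (hχ.mono hQ1)) (ball 0 1 ∩ φ ⁻¹' O)
    (hφ.isOpen_inter_preimage isOpen_ball hO) ?_
  · exact image_eq_empty.1 h
  · rintro _ ⟨q, hq, rfl⟩
    exact hχm (hQ1 hq)
  · ext z
    constructor
    · rintro ⟨q, hq, rfl⟩
      have hq' := hφχ q (hQ1 hq)
      rw [hQO] at hq
      refine ⟨⟨hχm (hQ1 (hQO ▸ hq)), ?_⟩, fun hW => hq.2 ⟨_, hW, hq'⟩⟩
      rw [mem_preimage, hq']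
      exact hq.1
    · rintro ⟨⟨hz1, hzO⟩, hzW⟩
      refine ⟨φ z, ?_, hχφ z hz1⟩
      rw [hQO]
      refine ⟨hzO, ?_⟩
      rintro ⟨y, hy, hyz⟩
      apply hzW
      rwa [← hχφ z hz1, ← hyz, hχφ y (hW1 hy)]

lemma isOpen_image_sq {O : Set ℂ} (hO : IsOpen O) : IsOpen ((fun z : ℂ => z ^ 2) '' O) := by
  have h : AnalyticOnNhd ℂ (fun z : ℂ => z ^ 2) univ := fun z _ => by fun_prop
  rcases h.is_constant_or_isOpen isPreconnected_univ with ⟨w, hw⟩ | h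
  · have h0 := hw 0 (mem_univ _)
    have h1 := hw 1 (mem_univ _)
    simp only [one_pow] at h1
    rw [← h1] at h0
    norm_num at h0
  · exact h O (subset_univ _) hO

lemma NoHoles.of_image_sq {W : Set ℂ} (hW : NoHoles ((fun z : ℂ => z ^ 2) '' W))
    (hWo : IsOpen W) (hneg : ∀ z ∈ W, -z ∉ W) : NoHoles W := by
  intro Q hQ1 hQ O hO hQO
  set T : ℂ → ℂ := fun z => z ^ 2
  have hTc : Continuous T := by fun_prop
  have hQ' : IsCompact (Q ∩ T ⁻¹' (T '' W)ᶜ) :=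
    hQ.inter_right ((isOpen_image_sq hWo).isClosed_compl.preimage hTc)
  have h0 := hW (T '' (Q ∩ T ⁻¹' (T '' W)ᶜ)) ?_ (hQ'.image hTc) (T '' O) (isOpen_image_sq hO) ?_
  rotate_left
  · rintro _ ⟨q, ⟨hq, -⟩, rfl⟩
    have := hQ1 hq
    simp only [mem_ball_zero_iff, T, norm_pow] at this ⊢
    exact pow_lt_one₀ (norm_nonneg _) this two_ne_zero
  · ext y
    constructor
    · rintro ⟨q, ⟨hq, hq'⟩, rfl⟩
      rw [hQO] at hq
      exact ⟨⟨q, hq.1, rfl⟩, hq'⟩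
    · rintro ⟨⟨o, ho, rfl⟩, hy⟩
      refine ⟨o, ⟨?_, hy⟩, rfl⟩
      rw [hQO]
      exact ⟨ho, fun h => hy ⟨o, h, rfl⟩⟩
  rw [image_eq_empty] at h0
  have hQneg : Q = O ∩ Neg.neg ⁻¹' W := by
    ext z
    constructor
    · intro hz
      have hzO : z ∈ O ∩ Wᶜ := hQO ▸ hz
      refine ⟨hzO.1, ?_⟩
      by_contra hzn
      have : z ∈ Q ∩ T ⁻¹' (T '' W)ᶜ := by
        refine ⟨hz, ?_⟩
        rintro ⟨w, hw, hwz⟩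
        rcases sq_eq_sq_iff_eq_or_eq_neg.1 hwz with rfl | rfl
        · exact hzO.2 hw
        · exact hzn hw
      rw [h0] at this
      exact this
    · rintro ⟨hzO, hzn⟩
      rw [hQO]
      refine ⟨hzO, fun hz => ?_⟩
      exact hneg z hz hzn
  have hQo : IsOpen Q := by
    rw [hQneg]
    exact hO.inter (hWo.preimage continuous_neg)
  rcases isClopen_iff.1 ⟨hQ.isClosed, hQo⟩ with h | h
  · exact h
  · exact absurd (h ▸ hQ) (noncompact_univ ℂ)

/-- Square roots exist on a connected open subset of the punctured disk without holes. -/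
lemma NoHoles.exists_sqrt {W : Set ℂ} (hW : NoHoles W) (hW1 : W ⊆ ball 0 1) (hWo : IsOpen W)
    (hWc : IsConnected W) (h0 : (0 : ℂ) ∉ W) :
    ∃ s : ℂ → ℂ, ContinuousOn s W ∧ ∀ z ∈ W, s z ^ 2 = z := by
  obtain ⟨z₀, hz₀⟩ := hWc.nonempty
  obtain ⟨s₀, hs₀⟩ : ∃ s₀ : ℂ, s₀ ^ 2 = z₀ := ⟨z₀ ^ (1 / 2 : ℂ), by
    simp⟩
  have hroot : ∀ K ⊆ W, IsCompact K → z₀ ∈ K →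
      ∃ s : ℂ → ℂ, ContinuousOn s K ∧ (∀ z ∈ K, s z ^ 2 = z) ∧ s z₀ = s₀ := by
    intro K hKW hK hzK
    obtain ⟨L, hL, hexp⟩ := hW.hasLog hW1 hWo hK hKW h0
    have hsq : ∀ z ∈ K, exp (L z / 2) ^ 2 = z := fun z hz => by
      rw [← exp_nat_mul]
      push_cast
      rw [mul_div_cancel₀ _ two_ne_zero, hexp z hz]
      exact sub_zero z
    have hc : ContinuousOn (fun z => exp (L z / 2)) K := (hL.div_const _).cexp
    have hz := hsq z₀ hzK
    rcases sq_eq_sq_iff_eq_or_eq_neg.1 (hz.trans hs₀.symm) with h | h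
    · exact ⟨_, hc, hsq, h⟩
    · refine ⟨fun z => -exp (L z / 2), hc.neg, fun z hz => ?_, ?_⟩
      · rw [neg_sq, hsq z hz]
      · simp only [h, neg_neg]
  have huniq : ∀ K ⊆ W, IsPreconnected K → z₀ ∈ K → ∀ s t : ℂ → ℂ, ContinuousOn s K →
      ContinuousOn t K → (∀ z ∈ K, s z ^ 2 = z) → (∀ z ∈ K, t z ^ 2 = z) → s z₀ = t z₀ →
      EqOn s t K := by
    intro K hKW hKc hzK s t hs ht hs2 ht2 hst
    refine hKc.eq_of_sq_eq hs ht (fun z hz => ?_) (fun {z} hz hz0 => ?_) hzK hst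
    · simp only [Pi.pow_apply, hs2 z hz, ht2 z hz]
    · have := ht2 z hz
      rw [hz0] at this
      apply h0
      rw [← this] at hz
      simpa using hKW hz
  have hcover : ∀ z ∈ W, ∃ K ⊆ W, IsCompact K ∧ IsPreconnected K ∧ z₀ ∈ K ∧ K ∈ 𝓝 z := by
    intro z hz
    obtain ⟨γ, hγ⟩ := ((hWo.isConnected_iff_isPathConnected).1 hWc).joinedIn z₀ hz₀ z hz
    obtain ⟨ε, hε, hεW⟩ := nhds_basis_closedBall.mem_iff.1 (hWo.mem_nhds hz)
    refine ⟨range γ ∪ closedBall z ε, union_subset (range_subset_iff.2 hγ) hεW,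
      (isCompact_range γ.continuous).union (isCompact_closedBall z ε),
      IsPreconnected.union z ⟨1, γ.target⟩ (mem_closedBall_self hε.le)
        (isPreconnected_range γ.continuous) (convex_closedBall z ε).isPreconnected,
      Or.inl ⟨0, γ.source⟩, ?_⟩
    exact mem_of_superset (closedBall_mem_nhds z hε) subset_union_right
  choose! K hKW hK hKc hzK hKn using hcover
  choose! r hrc hr2 hr0 using fun z hz => hroot (K z) (hKW z hz) (hK z hz) (hzK z hz)
  have hagree : ∀ z ∈ W, ∀ y ∈ K z, r y y = r z y := by
    intro z hz y hy
    have hyW := hKW z hz hy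
    obtain ⟨t, htc, ht2, ht0⟩ := hroot (K y ∪ K z) (union_subset (hKW y hyW) (hKW z hz))
      ((hK y hyW).union (hK z hz)) (Or.inl (hzK y hyW))
    have h1 := huniq (K y) (hKW y hyW) (hKc y hyW) (hzK y hyW) (r y) t (hrc y hyW)
      (htc.mono subset_union_left) (hr2 y hyW) (fun z hz => ht2 z (Or.inl hz))
      ((hr0 y hyW).trans ht0.symm)
    have h2 := huniq (K z) (hKW z hz) (hKc z hz) (hzK z hz) (r z) t (hrc z hz)
      (htc.mono subset_union_right) (hr2 z hz) (fun z hz => ht2 z (Or.inr hz))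
      ((hr0 z hz).trans ht0.symm)
    rw [h1 (mem_of_mem_nhds (hKn y hyW)), h2 hy]
  refine ⟨fun z => r z z, fun z hz => ContinuousAt.continuousWithinAt ?_,
    fun z hz => hr2 z hz z (mem_of_mem_nhds (hKn z hz))⟩
  refine ((hrc z hz).continuousAt (hKn z hz)).congr ?_
  filter_upwards [hKn z hz] with y hy
  exact (hagree z hz y hy).symm

end PlaneTopology

namespace PlaneTopology

open Set Filter Topology Metric Complex

/-- A family of holomorphic functions which is eventually bounded near each point of `U` converges
locally uniformly on `U` as soon as it converges pointwise. -/
lemma tendstoLocallyUniformlyOn_of_bounded {ι : Type*} {l : Filter ι} [l.NeBot] {U : Set ℂ}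
    {F : ι → ℂ → ℂ} {f : ℂ → ℂ} {B : ℝ} (hU : IsOpen U)
    (hF : ∀ᶠ n in l, DifferentiableOn ℂ (F n) U) (hB : ∀ᶠ n in l, ∀ z ∈ U, ‖F n z‖ ≤ B)
    (hf : ∀ z ∈ U, Tendsto (fun n => F n z) l (𝓝 (f z))) :
    TendstoLocallyUniformlyOn F f l U := by
  rw [Metric.tendstoLocallyUniformlyOn_iff]
  intro ε hε z hz
  obtain ⟨δ', hδ', hδU⟩ := nhds_basis_closedBall.mem_iff.1 (hU.mem_nhds hz)
  set δ := δ' / 2 with hδdef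
  have hδ : 0 < δ := by positivity
  have hB0 : 0 ≤ B := by
    obtain ⟨n, hn⟩ := hB.exists
    exact (norm_nonneg _).trans (hn z hz)
  have hlip : ∀ᶠ n in l, ∀ y ∈ ball z δ, ‖F n y - F n z‖ ≤ B / δ * ‖y - z‖ := by
    filter_upwards [hF, hB] with n hn hnB y hy
    have hsub : ∀ x ∈ ball z δ, closedBall x δ ⊆ U := fun x hx =>
      (closedBall_subset_closedBall' (by rw [mem_ball] at hx; linarith)).trans hδU
    refine Convex.norm_image_sub_le_of_norm_deriv_le (s := ball z δ) (fun x hx => ?_)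
      (fun x hx => ?_) (convex_ball z δ) (mem_ball_self hδ) hy
    · exact hn.differentiableAt (hU.mem_nhds (hsub x hx (mem_closedBall_self hδ.le)))
    · refine norm_deriv_le_of_forall_mem_sphere_norm_le hδ ?_ fun w hw =>
        hnB w (hsub x hx (sphere_subset_closedBall hw))
      refine DifferentiableOn.diffContOnCl ?_
      rw [closure_ball _ hδ.ne']
      exact hn.mono (hsub x hx)
  have hball : ball z δ ⊆ U := (ball_subset_closedBall.trans
    (closedBall_subset_closedBall (by linarith))).trans hδU
  have hlipf : ∀ y ∈ ball z δ, ‖f y - f z‖ ≤ B / δ * ‖y - z‖ := by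
    intro y hy
    exact le_of_tendsto ((hf y (hball hy)).sub (hf z hz)).norm (hlip.mono fun n hn => hn y hy)
  set C := B / δ with hC
  have hC0 : 0 ≤ C := by positivity
  set η := min δ (ε / (4 * (C + 1))) with hη
  have hη0 : 0 < η := by positivity
  refine ⟨ball z η, nhdsWithin_le_nhds (ball_mem_nhds z hη0), ?_⟩
  filter_upwards [hlip, (Metric.tendsto_nhds.1 (hf z hz)) (ε / 2) (by positivity)] with n hn hnz
  intro y hy
  have hyδ : y ∈ ball z δ := ball_subset_ball (min_le_left _ _) hy
  have hyη : C * ‖y - z‖ ≤ ε / 4 := by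
    rw [mem_ball, dist_eq_norm] at hy
    have h1 : ‖y - z‖ ≤ ε / (4 * (C + 1)) := hy.le.trans (min_le_right _ _)
    calc C * ‖y - z‖ ≤ (C + 1) * (ε / (4 * (C + 1))) := by gcongr; linarith
      _ = ε / 4 := by field_simp
  have h1 := hn y hyδ
  have h2 := hlipf y hyδ
  rw [dist_eq_norm] at hnz ⊢
  have heq : f y - F n y = (f y - f z) - (F n z - f z) - (F n y - F n z) := by ring
  rw [heq]
  calc _ ≤ ‖f y - f z‖ + ‖F n z - f z‖ + ‖F n y - F n z‖ :=
        (norm_sub_le _ _).trans (by gcongr; exact norm_sub_le _ _)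
    _ < ε := by linarith

lemma exists_tendsto_ultrafilter {ι : Type*} (l : Ultrafilter ι) {a : ι → ℂ} {B : ℝ}
    (h : ∀ᶠ n in l, ‖a n‖ ≤ B) : ∃ x, Tendsto a l (𝓝 x) := by
  obtain ⟨x, -, hx⟩ := (isCompact_closedBall (0 : ℂ) B).ultrafilter_le_nhds (l.map a) (by
    rw [le_principal_iff]
    exact h.mono fun n hn => by simpa using hn)
  exact ⟨x, hx⟩

/-- **Hurwitz's theorem**: a nonconstant locally uniform limit of injective holomorphic functions
is injective. -/
lemma injOn_of_tendstoLocallyUniformlyOn {ι : Type*} {l : Filter ι} [l.NeBot] {U : Set ℂ}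
    {F : ι → ℂ → ℂ} {f : ℂ → ℂ} (hU : IsOpen U) (hUc : IsPreconnected U)
    (hF : ∀ᶠ n in l, DifferentiableOn ℂ (F n) U) (hinj : ∀ᶠ n in l, InjOn (F n) U)
    (hf : TendstoLocallyUniformlyOn F f l U) (hne : ¬ ∃ c, ∀ z ∈ U, f z = c) :
    InjOn f U := by
  intro a ha b hb hab
  by_contra hne'
  have hfd : DifferentiableOn ℂ f U := hf.differentiableOn hF hU
  have hfa : AnalyticOnNhd ℂ f U := hfd.analyticOnNhd hU
  have hev : ∀ᶠ z in 𝓝[≠] b, f z ≠ f a := by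
    rcases (hfa b hb).eventually_eq_or_eventually_ne (analyticAt_const (v := f a)) with h | h
    · exact absurd ⟨f a, fun z hz =>
        hfa.eqOn_of_preconnected_of_eventuallyEq analyticOnNhd_const hUc hb h hz⟩ hne
    · exact h
  rw [eventually_nhdsWithin_iff] at hev
  have hnhds : {z | z ∈ ({b}ᶜ : Set ℂ) → f z ≠ f a} ∩ (U ∩ {a}ᶜ) ∈ 𝓝 b :=
    inter_mem hev (inter_mem (hU.mem_nhds hb) (isOpen_compl_singleton.mem_nhds (Ne.symm hne')))
  obtain ⟨r, hr, hrs⟩ := nhds_basis_closedBall.mem_iff.1 hnhds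
  have hrU : closedBall b r ⊆ U := fun z hz => (hrs hz).2.1
  obtain ⟨w, hw, hmin⟩ := (isCompact_sphere b r).exists_isMinOn
    (NormedSpace.sphere_nonempty.2 hr.le)
    (f := fun z => ‖f z - f a‖) ((hfd.continuousOn.mono
      (sphere_subset_closedBall.trans hrU)).sub continuousOn_const).norm
  set m := ‖f w - f a‖ with hm
  have hm0 : 0 < m := by
    refine norm_pos_iff.2 (sub_ne_zero.2 ((hrs (sphere_subset_closedBall hw)).1 ?_))
    rintro rfl
    simp only [mem_sphere, dist_self] at hw
    exact hr.ne hw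
  have hunif := (tendstoLocallyUniformlyOn_iff_forall_isCompact hU).1 hf
    (closedBall b r ∪ {a}) (union_subset hrU (singleton_subset_iff.2 ha))
    ((isCompact_closedBall b r).union isCompact_singleton)
  obtain ⟨n, hnu, hnd, hni⟩ :=
    ((Metric.tendstoUniformlyOn_iff.1 hunif (m / 4) (by positivity)).and (hF.and hinj)).exists
  have hna : ‖f a - F n a‖ < m / 4 := by
    have := hnu a (Or.inr rfl)
    rwa [dist_eq_norm] at this
  have hnz : ∀ z ∈ closedBall b r, ‖f z - F n z‖ < m / 4 := fun z hz => by
    have := hnu z (Or.inl hz)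
    rwa [dist_eq_norm] at this
  have h0 : ∀ z ∈ closedBall b r, F n z - F n a ≠ 0 := fun z hz h => by
    have := hni (hrU hz) ha (sub_eq_zero.1 h)
    exact (hrs hz).2.2 this
  have hd : DiffContOnCl ℂ (fun z => (F n z - F n a)⁻¹) (ball b r) := by
    refine DifferentiableOn.diffContOnCl ?_
    rw [closure_ball _ hr.ne']
    exact ((hnd.mono hrU).sub_const _).fun_inv h0
  have hbd := norm_le_of_forall_mem_frontier_norm_le isBounded_ball hd (C := 2 / m)
    (fun z hz => ?_) (subset_closure (mem_ball_self hr))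
  · have h1 : ‖F n b - F n a‖ < m / 2 := by
      have e : F n b - F n a = (f a - F n a) - (f b - F n b) := by rw [hab]; ring
      rw [e]
      have := norm_sub_le (f a - F n a) (f b - F n b)
      have := hnz b (mem_closedBall_self hr.le)
      linarith
    have h2 : 0 < ‖F n b - F n a‖ := norm_pos_iff.2 (h0 b (mem_closedBall_self hr.le))
    rw [norm_inv, inv_le_comm₀ h2 (by positivity), inv_div] at hbd
    linarith
  · rw [frontier_ball _ hr.ne'] at hz
    have hzc := sphere_subset_closedBall hz
    have h1 : m ≤ ‖f z - f a‖ := hmin hz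
    have e : f z - f a = (F n z - F n a) + (f z - F n z) - (f a - F n a) := by ring
    have h2 : ‖f z - f a‖ ≤ ‖F n z - F n a‖ + ‖f z - F n z‖ + ‖f a - F n a‖ := by
      rw [e]
      exact (norm_sub_le _ _).trans (by gcongr; exact norm_add_le _ _)
    have h3 := hnz z hzc
    rw [norm_inv, inv_le_comm₀ (norm_pos_iff.2 (h0 z hzc)) (by positivity), inv_div]
    linarith

lemma isOpen_image_of_injOn {U : Set ℂ} {f : ℂ → ℂ} (hU : IsOpen U) (hUc : IsPreconnected U)
    (hf : DifferentiableOn ℂ f U) (hinj : InjOn f U) {V : Set ℂ} (hVU : V ⊆ U) (hV : IsOpen V) :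
    IsOpen (f '' V) := by
  rcases (hf.analyticOnNhd hU).is_constant_or_isOpen hUc with ⟨w, hw⟩ | h
  · rcases V.eq_empty_or_nonempty with rfl | ⟨z, hz⟩
    · simp
    have hsub : U ⊆ {z} := fun y hy => hinj hy (hVU hz) ((hw y hy).trans (hw z (hVU hz)).symm)
    have : U ∈ 𝓝 z := hU.mem_nhds (hVU hz)
    have h2 := (mem_of_superset this hsub)
    exact absurd (finite_singleton z) (infinite_of_mem_nhds z h2)
  · exact h V hVU hV

end PlaneTopology

namespace PlaneTopology

open Set Filter Topology Metric Complex ComplexConjugate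

/-- The Möbius automorphism of the unit disk sending `w` to `0`. -/
noncomputable def mobius (w z : ℂ) : ℂ := (z - w) / (1 - conj w * z)

section mobius

variable {w z : ℂ}

lemma mobius_denom_ne_zero (hw : ‖w‖ < 1) (hz : ‖z‖ < 1) : 1 - conj w * z ≠ 0 := by
  intro h
  have h1 : ‖conj w * z‖ = 1 := by rw [← sub_eq_zero.1 h, norm_one]
  rw [norm_mul, RCLike.norm_conj] at h1
  nlinarith [norm_nonneg w, norm_nonneg z]

lemma norm_mobius_lt_one (hw : ‖w‖ < 1) (hz : ‖z‖ < 1) : ‖mobius w z‖ < 1 := by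
  have h0 := mobius_denom_ne_zero hw hz
  rw [mobius, norm_div, div_lt_one (norm_pos_iff.2 h0)]
  refine lt_of_pow_lt_pow_left₀ 2 (norm_nonneg _) ?_
  have hw2 : ‖w‖ ^ 2 < 1 := pow_lt_one₀ (norm_nonneg _) hw two_ne_zero
  have hz2 : ‖z‖ ^ 2 < 1 := pow_lt_one₀ (norm_nonneg _) hz two_ne_zero
  rw [← normSq_eq_norm_sq, normSq_apply] at hw2 hz2 ⊢
  rw [← normSq_eq_norm_sq, normSq_apply]
  simp only [sub_re, sub_im, mul_re, mul_im, conj_re, conj_im, one_re, one_im]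
  nlinarith [mul_pos (sub_pos.2 hw2) (sub_pos.2 hz2)]

lemma mobius_neg_mobius (hw : ‖w‖ < 1) (hz : ‖z‖ < 1) : mobius (-w) (mobius w z) = z := by
  have h0 := mobius_denom_ne_zero hw hz
  have h1 : 1 - conj (-w) * mobius w z ≠ 0 :=
    mobius_denom_ne_zero (by simpa using hw) (norm_mobius_lt_one hw hz)
  rw [mobius, div_eq_iff h1, mobius, map_neg]
  generalize conj w = v at *
  rw [sub_neg_eq_add, div_add' _ _ _ h0, div_eq_iff h0]
  have e : (1 - -v * ((z - w) / (1 - v * z))) * (1 - v * z) = (1 - v * z) + v * (z - w) := by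
    rw [sub_mul, one_mul, neg_mul, neg_mul, mul_assoc, div_mul_cancel₀ _ h0]; ring
  rw [mul_assoc, e]
  ring

lemma mobius_mobius_neg (hw : ‖w‖ < 1) (hz : ‖z‖ < 1) : mobius w (mobius (-w) z) = z := by
  have := mobius_neg_mobius (w := -w) (by simpa using hw) hz
  rwa [neg_neg] at this

@[simp] lemma mobius_self : mobius w w = 0 := by simp [mobius]

lemma hasDerivAt_mobius (hw : ‖w‖ < 1) (hz : ‖z‖ < 1) :
    HasDerivAt (mobius w) ((1 - conj w * w) / (1 - conj w * z) ^ 2) z := by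
  have h0 := mobius_denom_ne_zero hw hz
  have h1 : HasDerivAt (fun z => z - w) 1 z := (hasDerivAt_id z).sub_const w
  have h2 : HasDerivAt (fun z => 1 - conj w * z) (-conj w) z := by
    simpa using ((hasDerivAt_id z).const_mul (conj w)).const_sub 1
  refine (h1.div h2 h0).congr_deriv ?_
  ring

lemma continuousOn_mobius (hw : ‖w‖ < 1) : ContinuousOn (mobius w) (ball 0 1) := fun z hz =>
  (hasDerivAt_mobius hw (by simpa using hz)).continuousAt.continuousWithinAt

lemma injOn_mobius (hw : ‖w‖ < 1) : InjOn (mobius w) (ball 0 1) := fun x hx y hy h => by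
  rw [← mobius_neg_mobius hw (mem_ball_zero_iff.1 hx), h,
    mobius_neg_mobius hw (mem_ball_zero_iff.1 hy)]

lemma mapsTo_mobius (hw : ‖w‖ < 1) : MapsTo (mobius w) (ball 0 1) (ball 0 1) := fun z hz => by
  rw [mem_ball_zero_iff] at hz ⊢
  exact norm_mobius_lt_one hw hz

lemma NoHoles.image_mobius {W : Set ℂ} (hW : NoHoles W) (hW1 : W ⊆ ball 0 1) (hw : ‖w‖ < 1) :
    NoHoles (mobius w '' W) :=
  hW.image (continuousOn_mobius hw) (continuousOn_mobius (w := -w) (by simpa using hw))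
    (mapsTo_mobius (w := -w) (by simpa using hw))
    (fun z hz => mobius_neg_mobius hw (by simpa using hz))
    (fun z hz => mobius_mobius_neg hw (by simpa using hz)) hW1

end mobius

/-- Injective holomorphic maps of `U` into the unit disk that send `z₀` to `0` and whose image has
no holes. -/
structure IsDiskEmbedding (U : Set ℂ) (z₀ : ℂ) (f : ℂ → ℂ) : Prop where
  differentiableOn : DifferentiableOn ℂ f U
  injOn : InjOn f U
  mapsTo : MapsTo f U (ball 0 1)
  map_base : f z₀ = 0
  deriv_ne_zero : ∀ z ∈ U, deriv f z ≠ 0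
  noHoles : NoHoles (f '' U)

/-- **Koebe's square root trick**. -/
lemma IsDiskEmbedding.exists_larger_deriv {U : Set ℂ} {z₀ : ℂ} {f : ℂ → ℂ}
    (hf : IsDiskEmbedding U z₀ f) (hU : IsOpen U) (hUc : IsConnected U) (hz₀ : z₀ ∈ U) {w : ℂ}
    (hw : ‖w‖ < 1) (hwU : w ∉ f '' U) :
    ∃ g, IsDiskEmbedding U z₀ g ∧
      ‖deriv g z₀‖ = ‖deriv f z₀‖ * ((1 + ‖w‖) / (2 * √‖w‖)) := by
  have hfU : f '' U ⊆ ball 0 1 := hf.mapsTo.image_subset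
  set h : ℂ → ℂ := fun z => mobius w (f z) with hh
  have hfz : ∀ z ∈ U, ‖f z‖ < 1 := fun z hz => by simpa using hf.mapsTo hz
  have hhd : ∀ z ∈ U, HasDerivAt h
      ((1 - conj w * w) / (1 - conj w * f z) ^ 2 * deriv f z) z := fun z hz =>
    (hasDerivAt_mobius hw (hfz z hz)).comp z
      (hf.differentiableOn.differentiableAt (hU.mem_nhds hz)).hasDerivAt
  have hhdiff : DifferentiableOn ℂ h U := fun z hz =>
    (hhd z hz).differentiableAt.differentiableWithinAt
  have hhinj : InjOn h U := (injOn_mobius hw).comp hf.injOn hf.mapsTo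
  have hhU : h '' U = mobius w '' (f '' U) := by rw [image_image]
  have hnh : NoHoles (h '' U) := hhU ▸ hf.noHoles.image_mobius hfU hw
  have hh1 : h '' U ⊆ ball 0 1 := by
    rw [hhU]; exact ((mapsTo_mobius hw).mono_left hfU).image_subset
  have hho : IsOpen (h '' U) :=
    isOpen_image_of_injOn hU hUc.isPreconnected hhdiff hhinj subset_rfl hU
  have hh0 : (0 : ℂ) ∉ h '' U := by
    rintro ⟨z, hz, hz0⟩
    apply hwU
    refine ⟨z, hz, injOn_mobius hw (hf.mapsTo hz) (by simpa using hw) ?_⟩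
    rw [mobius_self]; exact hz0
  obtain ⟨s, hsc, hs2⟩ := hnh.exists_sqrt hh1 hho (hUc.image h hhdiff.continuousOn) hh0
  have hs0 : ∀ y ∈ h '' U, s y ≠ 0 := fun y hy h0 => by
    have := hs2 y hy
    rw [h0] at this
    apply hh0
    rw [← this] at hy
    simpa using hy
  have hsd : ∀ y ∈ h '' U, HasDerivAt s (2 * s y)⁻¹ y := by
    intro y hy
    refine HasDerivAt.of_local_left_inverse (f := fun z => z ^ 2)
      (hsc.continuousAt (hho.mem_nhds hy)) ?_ (mul_ne_zero two_ne_zero (hs0 y hy)) ?_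
    · simpa using hasDerivAt_pow 2 (s y)
    · filter_upwards [hho.mem_nhds hy] with x hx using hs2 x hx
  have hs1 : ∀ y ∈ h '' U, ‖s y‖ < 1 := fun y hy => by
    have h1 : ‖y‖ < 1 := by simpa using hh1 hy
    rw [← hs2 y hy, norm_pow] at h1
    by_contra hcon
    exact absurd h1 (not_lt.2 (one_le_pow₀ (not_lt.1 hcon)))
  set k : ℂ → ℂ := fun z => s (h z) with hk
  have hkd : ∀ z ∈ U, HasDerivAt k
      ((2 * s (h z))⁻¹ * ((1 - conj w * w) / (1 - conj w * f z) ^ 2 * deriv f z)) z :=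
    fun z hz => (hsd (h z) (mem_image_of_mem h hz)).comp z (hhd z hz)
  have hkinj : InjOn k U := fun x hx y hy hxy => by
    apply hhinj hx hy
    rw [← hs2 _ (mem_image_of_mem h hx), ← hs2 _ (mem_image_of_mem h hy)]
    exact congrArg (· ^ 2) hxy
  have hkdiff : DifferentiableOn ℂ k U := fun z hz =>
    (hkd z hz).differentiableAt.differentiableWithinAt
  have hko : IsOpen (k '' U) :=
    isOpen_image_of_injOn hU hUc.isPreconnected hkdiff hkinj subset_rfl hU
  have hk1 : MapsTo k U (ball 0 1) := fun z hz => by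
    rw [mem_ball_zero_iff]; exact hs1 _ (mem_image_of_mem h hz)
  have hknh : NoHoles (k '' U) := by
    refine NoHoles.of_image_sq ?_ hko ?_
    · have : (fun z : ℂ => z ^ 2) '' (k '' U) = h '' U := by
        rw [image_image]
        exact image_congr fun z hz => hs2 _ (mem_image_of_mem h hz)
      rwa [this]
    · rintro _ ⟨x, hx, rfl⟩ ⟨y, hy, hxy⟩
      have h1 : h x = h y := by
        rw [← hs2 _ (mem_image_of_mem h hx), ← hs2 _ (mem_image_of_mem h hy)]
        change k x ^ 2 = k y ^ 2
        rw [hxy, neg_sq]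
      have h2 : k y = k x := by simp only [hk, h1]
      rw [h2] at hxy
      exact hs0 _ (mem_image_of_mem h hx) (self_eq_neg.1 hxy)
  set b := k z₀ with hb
  have hb1 : ‖b‖ < 1 := hs1 _ (mem_image_of_mem h hz₀)
  have hb0 : b ≠ 0 := hs0 _ (mem_image_of_mem h hz₀)
  have hkz : ∀ z ∈ U, ‖k z‖ < 1 := fun z hz => hs1 _ (mem_image_of_mem h hz)
  have hgd : ∀ z ∈ U, HasDerivAt (fun z => mobius b (k z))
      ((1 - conj b * b) / (1 - conj b * k z) ^ 2 * ((2 * s (h z))⁻¹ *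
        ((1 - conj w * w) / (1 - conj w * f z) ^ 2 * deriv f z))) z := fun z hz =>
    (hasDerivAt_mobius hb1 (hkz z hz)).comp z (hkd z hz)
  refine ⟨fun z => mobius b (k z), ⟨?_, (injOn_mobius hb1).comp hkinj hk1,
    (mapsTo_mobius hb1).comp hk1, mobius_self, ?_, ?_⟩, ?_⟩
  · exact fun z hz => (hgd z hz).differentiableAt.differentiableWithinAt
  · intro z hz
    rw [(hgd z hz).deriv]
    have h1 := mobius_denom_ne_zero hb1 hb1
    have h2 := mobius_denom_ne_zero hb1 (hkz z hz)
    have h3 := mobius_denom_ne_zero hw hw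
    have h4 := mobius_denom_ne_zero hw (hfz z hz)
    have h5 := hs0 _ (mem_image_of_mem h hz)
    have h6 := hf.deriv_ne_zero z hz
    exact mul_ne_zero (div_ne_zero h1 (pow_ne_zero 2 h2)) (mul_ne_zero (inv_ne_zero
      (mul_ne_zero two_ne_zero h5)) (mul_ne_zero (div_ne_zero h3 (pow_ne_zero 2 h4)) h6))
  · have := hknh.image_mobius hk1.image_subset hb1
    rwa [image_image] at this
  · have hnw : ∀ v : ℂ, ‖v‖ < 1 → ‖1 - conj v * v‖ = 1 - ‖v‖ ^ 2 := fun v hv => by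
      have hv2 : ‖v‖ ^ 2 < 1 := pow_lt_one₀ (norm_nonneg _) hv two_ne_zero
      have : 1 - conj v * v = ((1 - ‖v‖ ^ 2 : ℝ) : ℂ) := by
        rw [mul_comm, mul_conj, normSq_eq_norm_sq]; push_cast; ring
      rw [this, norm_real, Real.norm_of_nonneg (by linarith)]
    have hbw : ‖b‖ ^ 2 = ‖w‖ := by
      rw [← norm_pow, hb]
      change ‖s (h z₀) ^ 2‖ = _
      rw [hs2 _ (mem_image_of_mem h hz₀)]
      simp [hh, hf.map_base, mobius]
    have hbs : ‖b‖ = √‖w‖ := by rw [← hbw, Real.sqrt_sq (norm_nonneg _)]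
    rw [(hgd z₀ hz₀).deriv, hf.map_base, norm_mul, norm_mul, norm_div, norm_mul, norm_inv,
      norm_pow, hnw b hb1, norm_mul, norm_div, hnw w hw]
    change (1 - ‖b‖ ^ 2) / (1 - ‖b‖ ^ 2) ^ 2 * ((‖(2 : ℂ)‖ * ‖b‖)⁻¹ * _) = _
    have h1 : 0 < 1 - ‖w‖ := by linarith
    have h2 : 0 < √‖w‖ := by rw [← hbs]; exact norm_pos_iff.2 hb0
    rw [hbw, hbs]
    simp only [mul_zero, sub_zero, one_pow, norm_one, div_one, Complex.norm_ofNat]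
    field_simp
    ring

end PlaneTopology

namespace PlaneTopology

open Set Filter Topology Metric Complex ComplexConjugate Bornology

lemma exists_isDiskEmbedding {U : Set ℂ} (z₀ : ℂ) (hb : IsBounded U)
    (hUcc : IsPreconnected Uᶜ) : ∃ f, IsDiskEmbedding U z₀ f := by
  obtain ⟨R, hR0, hR⟩ : ∃ R : ℝ, 0 < R ∧ U ⊆ ball z₀ R := by
    obtain ⟨R, hR⟩ := (isBounded_iff_subset_ball z₀).1 hb
    exact ⟨max R 1, by positivity, hR.trans (ball_subset_ball (le_max_left _ _))⟩
  have hRc : (R : ℂ) ≠ 0 := by exact_mod_cast hR0.ne'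
  set f : ℂ → ℂ := fun z => (z - z₀) / R with hf
  have hfd : ∀ z, HasDerivAt f (1 / R) z := fun z =>
    ((hasDerivAt_id z).sub_const z₀).div_const _
  have hfi : Function.Injective f := fun x y hxy => by
    have h : (x - z₀) / (R : ℂ) = (y - z₀) / R := hxy
    rw [div_left_inj' hRc] at h
    exact sub_left_injective h
  have hfc : Continuous f := by fun_prop
  have hfn : ∀ z, f z ∈ ball (0 : ℂ) 1 ↔ z ∈ ball z₀ R := fun z => by
    rw [mem_ball_zero_iff, mem_ball, dist_eq_norm, hf, norm_div, norm_real,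
      Real.norm_of_nonneg hR0.le, div_lt_one hR0]
  refine ⟨f, fun z _ => (hfd z).differentiableAt.differentiableWithinAt, hfi.injOn,
    fun z hz => (hfn z).2 (hR hz), by simp [hf], fun z _ => ?_, ?_⟩
  · rw [(hfd z).deriv]
    exact one_div_ne_zero hRc
  · intro Q hQ1 hQ O hO hQO
    by_contra hne
    obtain ⟨q, hq⟩ := nonempty_iff_ne_empty.2 hne
    have hfs : ∀ y, ∃ z, f z = y := fun y => ⟨R * y + z₀, by simp [hf, hRc]⟩
    obtain ⟨q', rfl⟩ := hfs q
    have hfar : z₀ + R ∉ ball z₀ R := by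
      simp [abs_of_pos hR0]
    have key := hUcc (f ⁻¹' O) (f ⁻¹' Qᶜ) (hO.preimage hfc)
      (hQ.isClosed.isOpen_compl.preimage hfc) ?_ ⟨q', ?_, ?_⟩ ⟨z₀ + R, ?_, ?_⟩
    · obtain ⟨z, hzU, hzO, hzQ⟩ := key
      apply hzQ
      rw [hQO]
      exact ⟨hzO, fun ⟨x, hx, hxz⟩ => hzU (hfi hxz ▸ hx)⟩
    · intro z _
      by_cases hz : f z ∈ Q
      · rw [hQO] at hz
        exact Or.inl hz.1
      · exact Or.inr hz
    · rw [hQO] at hq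
      exact fun h => hq.2 ⟨q', h, rfl⟩
    · rw [hQO] at hq
      exact hq.1
    · exact fun h => hfar (hR h)
    · exact fun h => hfar ((hfn _).1 (hQ1 h))

lemma exists_norm_deriv_le {U : Set ℂ} {z₀ : ℂ} (hU : IsOpen U) (hz₀ : z₀ ∈ U) :
    ∃ B : ℝ, ∀ f, IsDiskEmbedding U z₀ f → ‖deriv f z₀‖ ≤ B := by
  obtain ⟨ρ, hρ, hρU⟩ := nhds_basis_closedBall.mem_iff.1 (hU.mem_nhds hz₀)
  refine ⟨1 / ρ, fun f hf => norm_deriv_le_of_forall_mem_sphere_norm_le hρ ?_ fun z hz => ?_⟩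
  · refine (hf.differentiableOn.mono ?_).diffContOnCl
    rw [closure_ball _ hρ.ne']
    exact hρU
  · have := hf.mapsTo (hρU (sphere_subset_closedBall hz))
    rw [mem_ball_zero_iff] at this
    exact this.le

section inverse

variable {U : Set ℂ} {z₀ : ℂ} {f : ℂ → ℂ}

lemma IsDiskEmbedding.hasDerivAt_invFunOn (hf : IsDiskEmbedding U z₀ f) (hU : IsOpen U)
    (hUc : IsConnected U) {z : ℂ} (hz : z ∈ U) :
    HasDerivAt (Function.invFunOn f U) (deriv f z)⁻¹ (f z) := by
  have hleft : ∀ x ∈ U, Function.invFunOn f U (f x) = x := fun x hx =>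
    hf.injOn.leftInvOn_invFunOn hx
  have hopen : IsOpen (f '' U) :=
    isOpen_image_of_injOn hU hUc.isPreconnected hf.differentiableOn hf.injOn subset_rfl hU
  have hcont : ContinuousAt (Function.invFunOn f U) (f z) := by
    rw [ContinuousAt, hleft z hz]
    intro s hs
    obtain ⟨t, hts, ht, hzt⟩ := _root_.mem_nhds_iff.1 (inter_mem hs (hU.mem_nhds hz))
    have ht' : IsOpen (f '' t) :=
      isOpen_image_of_injOn hU hUc.isPreconnected hf.differentiableOn hf.injOn
        (fun x hx => (hts hx).2) ht
    rw [mem_map]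
    filter_upwards [ht'.mem_nhds (mem_image_of_mem f hzt)]
    rintro _ ⟨x, hx, rfl⟩
    rw [mem_preimage, hleft x (hts hx).2]
    exact (hts hx).1
  refine HasDerivAt.of_local_left_inverse (f := f) hcont ?_ (hf.deriv_ne_zero z hz) ?_
  · rw [hleft z hz]
    exact (hf.differentiableOn.differentiableAt (hU.mem_nhds hz)).hasDerivAt
  · filter_upwards [hopen.mem_nhds (mem_image_of_mem f hz)]
    rintro _ ⟨x, hx, rfl⟩
    rw [hleft x hx]

end inverse

/-- **Riemann mapping theorem** for a bounded plane domain with connected complement. -/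
theorem exists_riemann_map {U : Set ℂ} (hU : IsOpen U) (hUc : IsConnected U) (hb : IsBounded U)
    (hUcc : IsPreconnected Uᶜ) (hreg : interior (closure U) ⊆ U) :
    ∃ ψ : ℂ → ℂ, DifferentiableOn ℂ ψ (ball 0 1) ∧ InjOn ψ (ball 0 1) ∧ ψ '' ball 0 1 = U := by
  obtain ⟨z₀, hz₀⟩ := hUc.nonempty
  obtain ⟨f₀, hf₀⟩ := exists_isDiskEmbedding z₀ hb hUcc
  obtain ⟨B, hB⟩ := exists_norm_deriv_le hU hz₀
  obtain ⟨R, hR⟩ := hb.exists_norm_le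
  set S : Set ℝ := {t | ∃ f, IsDiskEmbedding U z₀ f ∧ ‖deriv f z₀‖ = t} with hS
  have hSb : BddAbove S := ⟨B, by rintro _ ⟨f, hf, rfl⟩; exact hB f hf⟩
  have hSne : S.Nonempty := ⟨_, f₀, hf₀, rfl⟩
  obtain ⟨u, -, hu, huS⟩ := exists_seq_tendsto_sSup hSne hSb
  choose f hf hfu using huS
  set M := sSup S
  have hM : 0 < M := lt_of_lt_of_le (norm_pos_iff.2 (hf₀.deriv_ne_zero z₀ hz₀))
    (le_csSup hSb ⟨f₀, hf₀, rfl⟩)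
  have hfM : ∀ g, IsDiskEmbedding U z₀ g → ‖deriv g z₀‖ ≤ M := fun g hg =>
    le_csSup hSb ⟨g, hg, rfl⟩
  have hexh : ∀ r < 1, ∀ᶠ n in atTop, ball (0 : ℂ) r ⊆ f n '' U := by
    intro r hr
    have hc : 1 < 1 + (1 - √r) ^ 2 / 2 := by
      have : √r < 1 := by
        rw [Real.sqrt_lt' one_pos]; simpa using hr
      have : 0 < (1 - √r) ^ 2 := by
        have : 0 < 1 - √r := by linarith
        positivity
      linarith
    set c := 1 + (1 - √r) ^ 2 / 2 with hcdef
    have hMc : M / c < M := div_lt_self hM hc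
    filter_upwards [hu.eventually (lt_mem_nhds hMc)] with n hn w hw
    by_contra hwU
    rw [mem_ball_zero_iff] at hw
    obtain ⟨g, hg, hgd⟩ := (hf n).exists_larger_deriv hU hUc hz₀ (hw.trans hr) hwU
    have hw0 : 0 < ‖w‖ := by
      rw [norm_pos_iff]
      rintro rfl
      exact hwU ⟨z₀, hz₀, (hf n).map_base⟩
    have hs0 : 0 < √‖w‖ := Real.sqrt_pos.2 hw0
    have hs1 : √‖w‖ ≤ √r := Real.sqrt_le_sqrt hw.le
    have hs2 : √r < 1 := by
      rw [Real.sqrt_lt' one_pos]; simpa using hr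
    have hfac : c ≤ (1 + ‖w‖) / (2 * √‖w‖) := by
      rw [le_div_iff₀ (by positivity), hcdef]
      nth_rewrite 2 [← Real.sq_sqrt hw0.le]
      generalize √‖w‖ = s at *
      generalize √r = t at *
      have h1 : (1 - t) ^ 2 ≤ (1 - s) ^ 2 := by nlinarith
      have h2 : (1 - t) ^ 2 * s ≤ (1 - s) ^ 2 := by
        nlinarith [mul_nonneg (sq_nonneg (1 - t)) (sub_nonneg.2 (hs1.trans hs2.le))]
      nlinarith
    have h1 := hfM g hg
    rw [hgd, hfu] at h1
    have h2 : M < u n * c := (div_lt_iff₀ (by linarith)).1 hn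
    have h3 : 0 ≤ u n := by rw [← hfu]; exact norm_nonneg _
    nlinarith [mul_le_mul_of_nonneg_left hfac h3]
  set l : Ultrafilter ℕ := hyperfilter ℕ with hl
  have hlt : (l : Filter ℕ) ≤ atTop := Nat.hyperfilter_le_atTop
  set g : ℕ → ℂ → ℂ := fun n => Function.invFunOn (f n) U with hg
  have hgf : ∀ n, ∀ z ∈ U, g n (f n z) = z := fun n z hz => (hf n).injOn.leftInvOn_invFunOn hz
  have hgU : ∀ n, ∀ y ∈ f n '' U, g n y ∈ U := by
    rintro n _ ⟨z, hz, rfl⟩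
    rwa [hgf n z hz]
  have hgi : ∀ n, InjOn (g n) (f n '' U) := by
    rintro n _ ⟨z, hz, rfl⟩ _ ⟨z', hz', rfl⟩ h
    rw [hgf n z hz, hgf n z' hz'] at h
    rw [h]
  have hgd : ∀ n, DifferentiableOn ℂ (g n) (f n '' U) := by
    rintro n _ ⟨z, hz, rfl⟩
    exact ((hf n).hasDerivAt_invFunOn hU hUc hz).differentiableAt.differentiableWithinAt
  have hrad : ∀ z ∈ ball (0 : ℂ) 1, ∃ r, r < 1 ∧ z ∈ ball (0 : ℂ) r := fun z hz => by
    rw [mem_ball_zero_iff] at hz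
    obtain ⟨r, h1, h2⟩ := exists_between hz
    exact ⟨r, h2, by simpa using h1⟩
  have hexh' : ∀ r < 1, ∀ᶠ n in (l : Filter ℕ), ball (0 : ℂ) r ⊆ f n '' U := fun r hr =>
    (hexh r hr).filter_mono hlt
  have hlim : ∀ z, ∃ x, z ∈ ball (0 : ℂ) 1 → Tendsto (fun n => g n z) l (𝓝 x) := by
    intro z
    by_cases hz : z ∈ ball (0 : ℂ) 1
    · obtain ⟨r, hr, hzr⟩ := hrad z hz
      obtain ⟨x, hx⟩ := exists_tendsto_ultrafilter l (a := fun n => g n z) (B := R)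
        ((hexh' r hr).mono fun n hn => hR _ (hgU n _ (hn hzr)))
      exact ⟨x, fun _ => hx⟩
    · exact ⟨0, fun h => absurd h hz⟩
  choose ψ hψ using hlim
  have hsub : ∀ r < 1, ball (0 : ℂ) r ⊆ ball 0 1 := fun r hr => ball_subset_ball hr.le
  have hgdr : ∀ r < 1, ∀ᶠ n in (l : Filter ℕ), DifferentiableOn ℂ (g n) (ball 0 r) :=
    fun r hr => (hexh' r hr).mono fun n hn => (hgd n).mono hn
  have hloc : ∀ r < 1, TendstoLocallyUniformlyOn g ψ l (ball 0 r) := fun r hr =>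
    tendstoLocallyUniformlyOn_of_bounded isOpen_ball (hgdr r hr)
      ((hexh' r hr).mono fun n hn z hz => hR _ (hgU n _ (hn hz)))
      fun z hz => hψ z (hsub r hr hz)
  have hψdr : ∀ r < 1, DifferentiableOn ℂ ψ (ball 0 r) := fun r hr =>
    (hloc r hr).differentiableOn (hgdr r hr) isOpen_ball
  have hψd : DifferentiableOn ℂ ψ (ball 0 1) := fun z hz => by
    obtain ⟨r, hr, hzr⟩ := hrad z hz
    exact ((hψdr r hr).differentiableAt (isOpen_ball.mem_nhds hzr)).differentiableWithinAt
  have hder : ∀ n, M⁻¹ ≤ ‖deriv (g n) 0‖ := fun n => by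
    have h := ((hf n).hasDerivAt_invFunOn hU hUc hz₀).deriv
    rw [(hf n).map_base] at h
    rw [hg, h, norm_inv]
    exact inv_anti₀ (norm_pos_iff.2 ((hf n).deriv_ne_zero z₀ hz₀)) (hfM _ (hf n))
  have hderψ : ∀ r : ℝ, 0 < r → r < 1 → M⁻¹ ≤ ‖deriv ψ 0‖ := fun r hr0 hr => by
    have h := ((hloc r hr).deriv (hgdr r hr) isOpen_ball).tendsto_at (mem_ball_self hr0)
    exact ge_of_tendsto' h.norm hder
  have hderψ0 : deriv ψ 0 ≠ 0 := by
    rw [← norm_pos_iff]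
    exact (inv_pos.2 hM).trans_le (hderψ (1 / 2) (by norm_num) (by norm_num))
  have hnc : ∀ r, 0 < r → r < 1 → ¬ ∃ c, ∀ z ∈ ball (0 : ℂ) r, ψ z = c := by
    rintro r hr0 hr ⟨c, hc⟩
    apply hderψ0
    have : ψ =ᶠ[𝓝 0] fun _ => c := by
      filter_upwards [isOpen_ball.mem_nhds (mem_ball_self hr0)] with z hz using hc z hz
    rw [this.deriv_eq]
    simp
  have hψi : InjOn ψ (ball 0 1) := by
    intro a ha b hb hab
    rw [mem_ball_zero_iff] at ha hb
    obtain ⟨r, h1, h2⟩ := exists_between (max_lt ha hb)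
    have hr0 : 0 < r := (norm_nonneg a).trans_lt ((le_max_left _ _).trans_lt h1)
    exact injOn_of_tendstoLocallyUniformlyOn isOpen_ball (convex_ball _ _).isPreconnected
      (hgdr r h2) ((hexh' r h2).mono fun n hn => (hgi n).mono hn) (hloc r h2) (hnc r hr0 h2)
      (by simpa using (le_max_left _ _).trans_lt h1)
      (by simpa using (le_max_right _ _).trans_lt h1) hab
  have hψU : ψ '' ball 0 1 ⊆ U := by
    refine (interior_maximal ?_ ?_).trans hreg
    · rintro _ ⟨z, hz, rfl⟩
      obtain ⟨r, hr, hzr⟩ := hrad z hz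
      exact mem_closure_of_tendsto (hψ z hz) ((hexh' r hr).mono fun n hn => hgU n _ (hn hzr))
    · exact isOpen_image_of_injOn isOpen_ball (convex_ball _ _).isPreconnected hψd hψi
        subset_rfl isOpen_ball
  refine ⟨ψ, hψd, hψi, hψU.antisymm fun v hv => ?_⟩
  have hfn1 : ∀ n, ∀ z ∈ U, ‖f n z‖ ≤ 1 := fun n z hz => by
    have := (hf n).mapsTo hz
    rw [mem_ball_zero_iff] at this
    exact this.le
  have hflim : ∀ z, ∃ x, z ∈ U → Tendsto (fun n => f n z) l (𝓝 x) := by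
    intro z
    by_cases hz : z ∈ U
    · obtain ⟨x, hx⟩ := exists_tendsto_ultrafilter l (a := fun n => f n z) (B := 1)
        (Eventually.of_forall fun n => hfn1 n z hz)
      exact ⟨x, fun _ => hx⟩
    · exact ⟨0, fun h => absurd h hz⟩
  choose F hF using hflim
  have hFloc : TendstoLocallyUniformlyOn f F l U :=
    tendstoLocallyUniformlyOn_of_bounded hU (Eventually.of_forall fun n => (hf n).differentiableOn)
      (Eventually.of_forall hfn1) hF
  have hFd : DifferentiableOn ℂ F U :=
    hFloc.differentiableOn (Eventually.of_forall fun n => (hf n).differentiableOn) hU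
  have hF1 : ∀ z ∈ U, ‖F z‖ ≤ 1 := fun z hz =>
    le_of_tendsto' (hF z hz).norm fun n => hfn1 n z hz
  have hFz₀ : F z₀ = 0 := by
    refine tendsto_nhds_unique (hF z₀ hz₀) ?_
    simp only [(hf _).map_base]
    exact tendsto_const_nhds
  have hFv : ‖F v‖ < 1 := by
    refine lt_of_le_of_ne (hF1 v hv) fun h => ?_
    have hmax : IsMaxOn (norm ∘ F) U v := fun z hz => by
      simpa [h] using hF1 z hz
    have := norm_eqOn_of_isPreconnected_of_isMaxOn hUc.isPreconnected hU hFd hv hmax hz₀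
    simp [hFz₀, h] at this
  obtain ⟨r, hr, hvr⟩ := hrad (F v) (by simpa using hFv)
  have htend : Tendsto (fun n => g n (f n v)) l (𝓝 (ψ (F v))) := by
    refine (hloc r hr).tendsto_comp ((hψdr r hr).continuousOn.continuousWithinAt hvr) hvr ?_
    rw [tendsto_nhdsWithin_iff]
    exact ⟨hF v hv, (hF v hv).eventually (isOpen_ball.mem_nhds hvr)⟩
  refine ⟨F v, by simpa using hFv, tendsto_nhds_unique htend ?_⟩
  simp only [hgf _ v hv]
  exact tendsto_const_nhds

end PlaneTopology

namespace PlaneTopology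

open Set Filter Topology Metric Complex Bornology MeasureTheory

lemma lintegral_norm_deriv_sq_eq_volume_image {U : Set ℂ} {φ : ℂ → ℂ} (hU : IsOpen U)
    (hd : DifferentiableOn ℂ φ U) (hi : InjOn φ U) :
    ∫⁻ z in U, ENNReal.ofReal (‖deriv φ z‖ ^ 2) = volume (φ '' U) := by
  have hdet : ∀ c : ℂ, (c • (1 : ℂ →L[ℝ] ℂ)).det = ‖c‖ ^ 2 := fun c => by
    rw [← normSq_eq_norm_sq, ← Algebra.norm_complex_apply, Algebra.norm_apply]
    rfl
  rw [← lintegral_abs_det_fderiv_eq_addHaar_image volume hU.measurableSet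
    (f' := fun z => deriv φ z • (1 : ℂ →L[ℝ] ℂ)) (fun z hz =>
      (hd.differentiableAt (hU.mem_nhds hz)).hasDerivAt.complexToReal_fderiv.hasFDerivWithinAt) hi]
  simp only [hdet, abs_pow, abs_norm]

lemma lintegral_ofReal_div_eq_top {c ρ : ℝ} (hc : 0 < c) (hρ : 0 < ρ) :
    ∫⁻ r in Ioc 0 ρ, ENNReal.ofReal (c / r) = ⊤ := by
  by_contra h
  have hcint : IntegrableOn (fun r => c / r) (Ioc 0 ρ) := by
    refine ⟨(measurable_const.div measurable_id).aestronglyMeasurable, ?_⟩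
    rw [hasFiniteIntegral_iff_ofReal]
    · exact lt_top_iff_ne_top.2 h
    · filter_upwards [ae_restrict_mem measurableSet_Ioc] with r hr
      exact div_nonneg hc.le hr.1.le
  have h2 : IntervalIntegrable (fun r : ℝ => r⁻¹) volume 0 ρ := by
    rw [intervalIntegrable_iff_integrableOn_Ioc_of_le hρ.le]
    refine IntegrableOn.congr_fun (hcint.const_mul c⁻¹) (fun r _ => ?_) measurableSet_Ioc
    field_simp
  rw [intervalIntegrable_inv_iff] at h2
  rcases h2 with h2 | h2
  · exact hρ.ne h2
  · exact h2 left_mem_uIcc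

lemma circle_mem_ball_one_iff {r θ : ℝ} (hr : 0 < r) :
    (r : ℂ) * exp (θ * I) ∈ ball (1 : ℂ) 1 ↔ r < 2 * Real.cos θ := by
  rw [mem_ball, dist_eq_norm, ← sq_lt_one_iff₀ (norm_nonneg _), ← normSq_eq_norm_sq, normSq_apply]
  simp only [sub_re, sub_im, re_ofReal_mul, im_ofReal_mul, exp_ofReal_mul_I_re,
    exp_ofReal_mul_I_im, one_re, one_im]
  have h := Real.sin_sq_add_cos_sq θ
  have h2 : (r * Real.cos θ - 1) * (r * Real.cos θ - 1) +
      (r * Real.sin θ - 0) * (r * Real.sin θ - 0) = r * (r - 2 * Real.cos θ) + 1 := by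
    linear_combination r ^ 2 * h
  rw [h2]
  constructor
  · intro h3
    nlinarith
  · intro h3
    nlinarith

/-- If `φ` oscillates by more than `ε` on the arc of radius `r`, then the mean square of `deriv φ`
over this arc is bounded below. -/
lemma ofReal_le_lintegral_arc {φ : ℂ → ℂ} (hd : DifferentiableOn ℂ φ (ball 1 1)) {ε r : ℝ}
    (hε : 0 < ε) (hr : 0 < r) {z w : ℂ} (hz : z ∈ ball (1 : ℂ) 1) (hw : w ∈ ball (1 : ℂ) 1)
    (hzr : ‖z‖ = r) (hwr : ‖w‖ = r) (hzw : ε < dist (φ z) (φ w)) :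
    ENNReal.ofReal (ε ^ 2 / (2 * Real.pi * r ^ 2)) ≤
      ∫⁻ θ in Ioo (-Real.pi) Real.pi, (ball (1 : ℂ) 1).indicator
        (fun z => ENNReal.ofReal (‖deriv φ z‖ ^ 2)) (r * exp (θ * I)) := by
  wlog harg : arg z ≤ arg w generalizing z w
  · exact this hw hz hwr hzr (by rwa [dist_comm]) (le_of_not_ge harg)
  have hz' : (r : ℂ) * exp (arg z * I) = z := by rw [← hzr, norm_mul_exp_arg_mul_I]
  have hw' : (r : ℂ) * exp (arg w * I) = w := by rw [← hwr, norm_mul_exp_arg_mul_I]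
  have hcz : r < 2 * Real.cos (arg z) := (circle_mem_ball_one_iff hr).1 (by rwa [hz'])
  have hcw : r < 2 * Real.cos (arg w) := (circle_mem_ball_one_iff hr).1 (by rwa [hw'])
  have hwpi : arg w < Real.pi := by
    refine lt_of_le_of_ne (arg_le_pi w) fun h => ?_
    rw [h, Real.cos_pi] at hcw
    linarith
  have hmem : ∀ θ ∈ Icc (arg z) (arg w), (r : ℂ) * exp (θ * I) ∈ ball (1 : ℂ) 1 := by
    intro θ hθ
    rw [circle_mem_ball_one_iff hr]
    rcases le_total 0 θ with h0 | h0
    · exact hcw.trans_le (mul_le_mul_of_nonneg_left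
        (Real.cos_le_cos_of_nonneg_of_le_pi h0 hwpi.le hθ.2) zero_le_two)
    · rw [← Real.cos_neg] at hcz ⊢
      exact hcz.trans_le (mul_le_mul_of_nonneg_left
        (Real.cos_le_cos_of_nonneg_of_le_pi (by linarith)
          (by linarith [neg_pi_lt_arg z]) (neg_le_neg hθ.1)) zero_le_two)
  have hcirc : Continuous fun θ : ℝ => (r : ℂ) * exp (θ * I) := by fun_prop
  have hcont : ContinuousOn (fun θ : ℝ => deriv φ (r * exp (θ * I))) (Icc (arg z) (arg w)) :=
    (hd.deriv isOpen_ball).continuousOn.comp hcirc.continuousOn hmem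
  set X : ℝ → ℝ := fun θ => ‖deriv φ (r * exp (θ * I))‖ with hX
  have hXc : ContinuousOn X (Icc (arg z) (arg w)) := hcont.norm
  have hder : ∀ θ ∈ uIcc (arg z) (arg w), HasDerivAt (fun θ : ℝ => φ (r * exp (θ * I)))
      (deriv φ (r * exp (θ * I)) * (r * (exp (θ * I) * I))) θ := by
    intro θ hθ
    rw [uIcc_of_le harg] at hθ
    have h1 : HasDerivAt (fun θ : ℝ => (r : ℂ) * exp (θ * I)) (r * (exp (θ * I) * I)) θ := by
      have := ((hasDerivAt_id θ).ofReal_comp.mul_const I).cexp.const_mul (r : ℂ)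
      simpa using this
    exact (hd.differentiableAt (isOpen_ball.mem_nhds (hmem θ hθ))).hasDerivAt.comp θ h1
  have hcint : IntervalIntegrable
      (fun θ : ℝ => deriv φ (r * exp (θ * I)) * (r * (exp (θ * I) * I))) volume
      (arg z) (arg w) := by
    refine ContinuousOn.intervalIntegrable ?_
    rw [uIcc_of_le harg]
    exact hcont.mul (Continuous.continuousOn (by fun_prop))
  have hftc := intervalIntegral.integral_eq_sub_of_hasDerivAt hder hcint
  simp only [hz', hw'] at hftc
  have hX2i : IntervalIntegrable (fun θ => X θ ^ 2) volume (arg z) (arg w) :=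
    ContinuousOn.intervalIntegrable (by rw [uIcc_of_le harg]; exact hXc.pow 2)
  have hπ := Real.pi_pos
  have hlow : ε < ∫ θ in (arg z)..(arg w), (Real.pi * r ^ 2 / ε * X θ ^ 2 + ε / (4 * Real.pi)) := by
    refine hzw.trans_le ?_
    rw [dist_comm, dist_eq_norm, ← hftc]
    refine intervalIntegral.norm_integral_le_of_norm_le harg (Eventually.of_forall fun θ _ => ?_)
      ((hX2i.const_mul _).add intervalIntegrable_const)
    have h1 : ‖deriv φ (r * exp (θ * I)) * (r * (exp (θ * I) * I))‖ = X θ * r := by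
      simp [hX, norm_exp_ofReal_mul_I, abs_of_pos hr]
    rw [h1, ← sub_nonneg]
    have h2 : Real.pi * r ^ 2 / ε * X θ ^ 2 + ε / (4 * Real.pi) - X θ * r =
        (2 * Real.pi * r * X θ - ε) ^ 2 / (4 * Real.pi * ε) := by
      field_simp
      ring
    rw [h2]
    positivity
  rw [intervalIntegral.integral_add (hX2i.const_mul _) intervalIntegrable_const,
    intervalIntegral.integral_const_mul, intervalIntegral.integral_const, smul_eq_mul] at hlow
  set J := ∫ θ in (arg z)..(arg w), X θ ^ 2 with hJ
  have hlen : (arg w - arg z) * (ε / (4 * Real.pi)) ≤ ε / 2 := by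
    have h1 : arg w - arg z ≤ 2 * Real.pi := by linarith [neg_pi_lt_arg z]
    calc (arg w - arg z) * (ε / (4 * Real.pi)) ≤ 2 * Real.pi * (ε / (4 * Real.pi)) := by gcongr
      _ = ε / 2 := by field_simp; ring
  have hJlow : ε ^ 2 / (2 * Real.pi * r ^ 2) ≤ J := by
    have h1 : ε / 2 ≤ Real.pi * r ^ 2 / ε * J := by linarith
    rw [div_le_iff₀ (by positivity)]
    have h2 : Real.pi * r ^ 2 / ε * J * (2 * ε) = J * (2 * Real.pi * r ^ 2) := by
      field_simp
    rw [← h2]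
    nlinarith
  refine (ENNReal.ofReal_le_ofReal hJlow).trans ?_
  rw [hJ, intervalIntegral.integral_of_le harg, ofReal_integral_eq_lintegral_ofReal
    ((intervalIntegrable_iff_integrableOn_Ioc_of_le harg).1 hX2i)
    (Eventually.of_forall fun θ => sq_nonneg _)]
  refine (lintegral_mono_ae ?_).trans (lintegral_mono_set (t := Ioo (-Real.pi) Real.pi)
    fun θ hθ => ⟨(neg_pi_lt_arg z).trans hθ.1, hθ.2.trans_lt hwpi⟩)
  filter_upwards [ae_restrict_mem measurableSet_Ioc] with θ hθ
  rw [indicator_of_mem (hmem θ (Ioc_subset_Icc_self hθ))]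

/-- **Length–area principle**: a conformal map with bounded image has arbitrarily small oscillation
along suitable small circular crosscuts. -/
lemma exists_small_crosscut_at_zero {φ : ℂ → ℂ} (hd : DifferentiableOn ℂ φ (ball 1 1))
    (hi : InjOn φ (ball 1 1)) (hb : IsBounded (φ '' ball 1 1)) {ε ρ : ℝ} (hε : 0 < ε)
    (hρ : 0 < ρ) :
    ∃ r, 0 < r ∧ r ≤ ρ ∧ ∀ z ∈ ball (1 : ℂ) 1, ∀ w ∈ ball (1 : ℂ) 1, ‖z‖ = r → ‖w‖ = r →
      dist (φ z) (φ w) ≤ ε := by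
  by_contra! hcon
  set H : ℂ → ENNReal := (ball (1 : ℂ) 1).indicator fun z => ENNReal.ofReal (‖deriv φ z‖ ^ 2)
    with hH
  have hHm : Measurable H :=
    (((measurable_deriv φ).norm.pow_const 2).ennreal_ofReal).indicator measurableSet_ball
  have hfin : ∫⁻ z, H z < ⊤ := by
    rw [hH, lintegral_indicator measurableSet_ball,
      lintegral_norm_deriv_sq_eq_volume_image isOpen_ball hd hi]
    exact hb.measure_lt_top
  have hsymm : ∀ p : ℝ × ℝ, Complex.polarCoord.symm p = p.1 * exp (p.2 * I) := fun p => by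
    rw [Complex.polarCoord_symm_apply, exp_mul_I, ofReal_cos, ofReal_sin]
  have hmeas : Measurable fun p : ℝ × ℝ => ENNReal.ofReal p.1 * H (p.1 * exp (p.2 * I)) :=
    measurable_fst.ennreal_ofReal.mul (hHm.comp (by fun_prop))
  refine hfin.ne ?_
  rw [← Complex.lintegral_comp_polarCoord_symm]
  simp only [hsymm, smul_eq_mul]
  rw [polarCoord_target, Measure.volume_eq_prod, ← Measure.prod_restrict,
    lintegral_prod _ hmeas.aemeasurable, eq_top_iff,
    ← lintegral_ofReal_div_eq_top (c := ε ^ 2 / (2 * Real.pi)) (by have := Real.pi_pos; positivity)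
      hρ]
  refine (lintegral_mono_ae ?_).trans (lintegral_mono_set (t := Ioi 0) fun r hr => hr.1)
  filter_upwards [ae_restrict_mem measurableSet_Ioc] with r hr
  obtain ⟨z, hz, w, hw, hzr, hwr, hzw⟩ := hcon r hr.1 hr.2
  have h := ofReal_le_lintegral_arc hd hε hr.1 hz hw hzr hwr hzw
  rw [lintegral_const_mul' _ _ ENNReal.ofReal_ne_top]
  have h2 : ε ^ 2 / (2 * Real.pi) / r = r * (ε ^ 2 / (2 * Real.pi * r ^ 2)) := by
    have := hr.1.ne'
    field_simp
  rw [h2, ENNReal.ofReal_mul hr.1.le]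
  exact mul_le_mul_right h _

lemma exists_small_crosscut {ψ : ℂ → ℂ} (hd : DifferentiableOn ℂ ψ (ball 0 1))
    (hi : InjOn ψ (ball 0 1)) (hb : IsBounded (ψ '' ball 0 1)) {a : ℂ} (ha : ‖a‖ = 1) {ε ρ : ℝ}
    (hε : 0 < ε) (hρ : 0 < ρ) :
    ∃ r, 0 < r ∧ r ≤ ρ ∧ ∀ z ∈ ball (0 : ℂ) 1, ∀ w ∈ ball (0 : ℂ) 1, dist z a = r →
      dist w a = r → dist (ψ z) (ψ w) ≤ ε := by
  have ha0 : a ≠ 0 := by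
    rintro rfl
    simp at ha
  have hm : ∀ z, a * (1 - z) ∈ ball (0 : ℂ) 1 ↔ z ∈ ball (1 : ℂ) 1 := fun z => by
    rw [mem_ball_zero_iff, norm_mul, ha, one_mul, mem_ball, dist_comm, dist_eq_norm]
  have hinv : ∀ z, a * (1 - (1 - z / a)) = z := fun z => by field_simp; ring
  have hinj : Function.Injective fun z : ℂ => a * (1 - z) := fun x y hxy => by
    have := mul_left_cancel₀ ha0 hxy
    exact sub_right_injective this
  have himg : (fun z => ψ (a * (1 - z))) '' ball 1 1 ⊆ ψ '' ball 0 1 := by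
    rintro _ ⟨z, hz, rfl⟩
    exact ⟨_, (hm z).2 hz, rfl⟩
  obtain ⟨r, hr0, hr, h⟩ := exists_small_crosscut_at_zero (φ := fun z => ψ (a * (1 - z)))
    (hd.comp (by fun_prop) fun z hz => (hm z).2 hz)
    (fun x hx y hy hxy => hinj (hi ((hm x).2 hx) ((hm y).2 hy) hxy)) (hb.subset himg) hε hρ
  refine ⟨r, hr0, hr, fun z hz w hw hzr hwr => ?_⟩
  have hn : ∀ z, ‖1 - z / a‖ = dist z a := fun z => by
    rw [dist_comm, dist_eq_norm, ← one_mul ‖1 - z / a‖, ← ha, ← norm_mul]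
    congr 1
    field_simp
  have := h (1 - z / a) ((hm _).1 (by rwa [hinv])) (1 - w / a) ((hm _).1 (by rwa [hinv]))
    (by rw [hn, hzr]) (by rw [hn, hwr])
  simpa only [hinv] using this

end PlaneTopology

namespace PlaneTopology

open Set Filter Topology Metric Complex Bornology

section circle

variable {γ : Circle → ℂ}

lemma isPreconnected_range_diff_singleton (hγ : Continuous γ) (hi : Function.Injective γ)
    {x : ℂ} (hx : x ∈ range γ) : IsPreconnected (range γ \ {x}) := by
  obtain ⟨t, rfl⟩ := hx
  have h : range γ \ {γ t} = (fun θ : ℝ => γ (t * Circle.exp θ)) '' Ioo 0 (2 * Real.pi) := by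
    ext y
    constructor
    · rintro ⟨⟨s, rfl⟩, hs⟩
      have hst : t ≠ s := fun h => hs (by rw [h]; rfl)
      exact ⟨Circle.angleDiff t s, ⟨Circle.angleDiff_pos hst, Circle.angleDiff_lt_two_pi t s⟩,
        congrArg γ (by rw [mul_comm, Circle.exp_angleDiff_mul])⟩
    · rintro ⟨θ, hθ, rfl⟩
      refine ⟨mem_range_self _, fun h => ?_⟩
      have h1 := hi h
      rw [mul_eq_left, Circle.exp_eq_one] at h1
      obtain ⟨n, rfl⟩ := h1
      have hπ := Real.pi_pos
      have h2 : (0 : ℝ) < n := pos_of_mul_pos_left hθ.1 (by positivity)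
      have h3 : (n : ℝ) < 1 := by nlinarith [hθ.2]
      norm_cast at h2 h3
      omega
  rw [h]
  exact isPreconnected_Ioo.image _ (Continuous.continuousOn (by fun_prop))

lemma exists_small_subarc (hγ : Continuous γ) (hi : Function.Injective γ) {ε : ℝ} (hε : 0 < ε) :
    ∃ δ > 0, ∀ x ∈ range γ, ∃ α ⊆ range γ, IsCompact α ∧ IsPreconnected α ∧
      range γ ∩ closedBall x δ ⊆ α ∧ α ⊆ closedBall x ε := by
  have huc := CompactSpace.uniformContinuous_of_continuous hγ
  obtain ⟨η, hη, hηγ⟩ := Metric.uniformContinuous_iff.1 huc ε hε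
  have hexp : ∀ᶠ θ : ℝ in 𝓝 0, dist (Circle.exp θ) 1 < η := by
    have := (Circle.exp.continuous.tendsto 0)
    rw [Circle.exp_zero] at this
    exact this.eventually (ball_mem_nhds _ hη)
  obtain ⟨κ, hκ, hκη⟩ := nhds_basis_closedBall.mem_iff.1 hexp
  rw [Real.closedBall_eq_Icc, zero_sub, zero_add] at hκη
  have hmul : ∀ t s : Circle, dist (t * s) t = dist s 1 := fun t s => by
    change dist ((t * s : Circle) : ℂ) t = dist (s : ℂ) (1 : Circle)
    rw [dist_eq_norm, dist_eq_norm, Circle.coe_mul, Circle.coe_one,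
      ← mul_sub_one, norm_mul, Circle.norm_coe, one_mul]
  have harg : ∀ᶠ s : Circle in 𝓝 1, ∃ θ ∈ Icc (-κ) κ, Circle.exp θ = s := by
    have h1 : ContinuousAt (fun s : Circle => arg s) 1 :=
      (continuousAt_arg (by simp)).comp (by fun_prop)
    have h2 : (fun s : Circle => arg s) ⁻¹' Icc (-κ) κ ∈ 𝓝 1 := by
      apply h1
      simpa using Icc_mem_nhds (neg_lt_zero.2 hκ) hκ
    filter_upwards [h2] with s hs
    exact ⟨arg s, hs, Circle.exp_arg s⟩
  obtain ⟨η', hη', hη's⟩ := Metric.eventually_nhds_iff.1 harg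
  have hsep : ∃ δ > 0, ∀ t s : Circle, dist (γ s) (γ t) ≤ δ → dist s t < η' := by
    have hcomp : IsCompact {p : Circle × Circle | η' ≤ dist p.1 p.2} :=
      (isClosed_le continuous_const continuous_dist).isCompact
    rcases {p : Circle × Circle | η' ≤ dist p.1 p.2}.eq_empty_or_nonempty with h | h
    · refine ⟨1, one_pos, fun t s _ => ?_⟩
      by_contra hcon
      have : (s, t) ∈ {p : Circle × Circle | η' ≤ dist p.1 p.2} := not_lt.1 hcon
      rw [h] at this
      exact this
    · obtain ⟨p, hp, hmin⟩ := hcomp.exists_isMinOn h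
        (f := fun p : Circle × Circle => dist (γ p.1) (γ p.2)) (by fun_prop)
      have hpos : 0 < dist (γ p.1) (γ p.2) := by
        refine dist_pos.2 fun h => ?_
        have : η' ≤ dist p.1 p.2 := hp
        rw [hi h, dist_self] at this
        linarith
      refine ⟨_, half_pos hpos, fun t s hts => ?_⟩
      by_contra hcon
      have : dist (γ p.1) (γ p.2) ≤ dist (γ s) (γ t) := hmin (a := (s, t)) (not_lt.1 hcon)
      linarith
  obtain ⟨δ, hδ, hδs⟩ := hsep
  refine ⟨δ, hδ, ?_⟩
  rintro _ ⟨t, rfl⟩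
  have hc : Continuous fun θ : ℝ => γ (t * Circle.exp θ) := by fun_prop
  refine ⟨(fun θ : ℝ => γ (t * Circle.exp θ)) '' Icc (-κ) κ, ?_, isCompact_Icc.image hc,
    isPreconnected_Icc.image _ hc.continuousOn, ?_, ?_⟩
  · rintro _ ⟨θ, -, rfl⟩
    exact mem_range_self _
  · rintro _ ⟨⟨s, rfl⟩, hs⟩
    have h1 : dist (s / t) 1 < η' := by
      rw [← hmul t, mul_div_cancel]
      exact hδs t s hs
    obtain ⟨θ, hθ, hθs⟩ := hη's h1
    exact ⟨θ, hθ, by simp only [hθs, mul_div_cancel]⟩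
  · rintro _ ⟨θ, hθ, rfl⟩
    refine (hηγ ?_).le
    rw [hmul]
    exact hκη hθ

lemma exists_isClosed_superset (hγ : Continuous γ) (hi : Function.Injective γ) {ε : ℝ}
    (hε : 0 < ε) :
    ∃ δ > 0, ∀ K : Set ℂ, IsClosed K → (∀ x ∈ K, ∀ y ∈ K, dist x y ≤ δ) →
      ∃ x₀ B, IsClosed B ∧ K ⊆ B ∧ B ⊆ closedBall x₀ ε ∧ IsPreconnected (range γ ∩ B) := by
  obtain ⟨δ, hδ, h⟩ := exists_small_subarc hγ hi hε
  refine ⟨min δ ε, lt_min hδ hε, fun K hK hKd => ?_⟩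
  rcases (K ∩ range γ).eq_empty_or_nonempty with hKC | ⟨x, hxK, hxC⟩
  · rcases K.eq_empty_or_nonempty with rfl | ⟨x, hx⟩
    · exact ⟨0, ∅, isClosed_empty, subset_rfl, empty_subset _, by simp [isPreconnected_empty]⟩
    · refine ⟨x, K, hK, subset_rfl, fun y hy => (hKd y hy x hx).trans (min_le_right _ _), ?_⟩
      rw [inter_comm, hKC]
      exact isPreconnected_empty
  · obtain ⟨α, hα, hαc, hαp, hαδ, hαε⟩ := h x hxC
    refine ⟨x, K ∪ α, hK.union hαc.isClosed, subset_union_left, union_subset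
      (fun y hy => (hKd y hy x hxK).trans (min_le_right _ _)) hαε, ?_⟩
    have : range γ ∩ (K ∪ α) = α := by
      refine Subset.antisymm ?_ fun y hy => ⟨hα hy, Or.inr hy⟩
      rintro y ⟨hyC, hyK | hy⟩
      · exact hαδ ⟨hyC, (hKd y hyK x hxK).trans (min_le_left _ _)⟩
      · exact hy
    rwa [this]

end circle

/-- A compact set `C ∪ B` with `C ∩ B` connected does not separate two points that are separated
neither by `C` nor, because they lie outside a disk containing `B`, by `B`. -/
lemma false_of_frontier_subset {U V C B : Set ℂ} {x₀ p q : ℂ} {R : ℝ} (hU : IsPreconnected U)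
    (hC : IsCompact C) (hUC : Disjoint U C) (hB : IsClosed B) (hBR : B ⊆ closedBall x₀ R)
    (hCB : IsPreconnected (C ∩ B)) (hV : IsBounded V) (hfr : frontier V ⊆ C ∪ B) (hpV : p ∈ V)
    (hqV : q ∉ V) (hp : p ∈ U) (hq : q ∈ U) (hpR : p ∉ closedBall x₀ R)
    (hqR : q ∉ closedBall x₀ R) : False := by
  refine not_hasLog_of_frontier_subset (hC.isClosed.union hB) hV hfr hpV hqV ?_
    (HasLog.union hC.isClosed hB hCB (hasLog_div_of_isPreconnected hC hU hUC hp hq) ?_)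
  · rintro (h | h)
    · exact hUC.le_bot ⟨hq, h⟩
    · exact hqR (hBR h)
  · simp only [div_eq_mul_inv]
    exact (hasLog_sub_of_convex hBR hpR).mul (hasLog_sub_of_convex hBR hqR).inv

section conformal

variable {ψ : ℂ → ℂ}

lemma isOpen_image_of_conformal (hd : DifferentiableOn ℂ ψ (ball 0 1)) (hi : InjOn ψ (ball 0 1))
    {N : Set ℂ} (hN : IsOpen N) : IsOpen (ψ '' (ball 0 1 ∩ N)) :=
  isOpen_image_of_injOn isOpen_ball (convex_ball _ _).isPreconnected hd hi inter_subset_left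
    (isOpen_ball.inter hN)

/-- The frontier of the image of a relatively open part of the disk. -/
lemma frontier_image_subset (hd : DifferentiableOn ℂ ψ (ball 0 1)) (hi : InjOn ψ (ball 0 1))
    {N : Set ℂ} (hN : IsOpen N) :
    frontier (ψ '' (ball 0 1 ∩ N)) ⊆
      frontier (ψ '' ball 0 1) ∪ ψ '' (ball 0 1 ∩ frontier N) := by
  intro x hx
  rw [(isOpen_image_of_conformal hd hi hN).frontier_eq] at hx
  by_cases hxU : x ∈ ψ '' ball 0 1
  · obtain ⟨z, hz, rfl⟩ := hxU
    refine Or.inr ⟨z, ⟨hz, ?_⟩, rfl⟩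
    rw [hN.frontier_eq]
    refine ⟨?_, fun h => hx.2 ⟨z, ⟨hz, h⟩, rfl⟩⟩
    by_contra hcl
    obtain ⟨_, ⟨w, hw, rfl⟩, ⟨w', hw', hww⟩⟩ := mem_closure_iff.1 hx.1 _
      (isOpen_image_of_conformal hd hi isClosed_closure.isOpen_compl) ⟨z, ⟨hz, hcl⟩, rfl⟩
    rw [← hi hw'.1 hw.1 hww] at hw
    exact hw.2 (subset_closure hw'.2)
  · left
    have := isOpen_image_of_conformal hd hi isOpen_univ
    rw [inter_univ] at this
    rw [this.frontier_eq]
    exact ⟨closure_mono (image_mono inter_subset_left) hx.1, hxU⟩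

variable {γ : Circle → ℂ}

lemma exists_small_image_ball (hd : DifferentiableOn ℂ ψ (ball 0 1)) (hi : InjOn ψ (ball 0 1))
    (hb : IsBounded (ψ '' ball 0 1)) (hγ : Continuous γ) (hγi : Function.Injective γ)
    (hγr : range γ = frontier (ψ '' ball 0 1)) {a : ℂ} (ha : ‖a‖ = 1) {ε : ℝ} (hε : 0 < ε) :
    ∃ r > 0, ∀ z ∈ ball (0 : ℂ) 1 ∩ ball a r, ∀ w ∈ ball (0 : ℂ) 1 ∩ ball a r,
      dist (ψ z) (ψ w) ≤ ε := by
  set D := ball (0 : ℂ) 1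
  have h0D : (0 : ℂ) ∈ D := mem_ball_self one_pos
  have haD : -a / 2 ∈ D := by
    rw [mem_ball_zero_iff, norm_div, norm_neg, ha]
    norm_num
  have hne : (0 : ℂ) ≠ -a / 2 := by
    intro h
    have h2 : a = 0 := by linear_combination 2 * h
    rw [h2, norm_zero] at ha
    exact zero_ne_one ha
  have hd0 : 0 < dist (ψ 0) (ψ (-a / 2)) := dist_pos.2 fun h => hne (hi h0D haD h)
  set ε' := min (ε / 2) (dist (ψ 0) (ψ (-a / 2)) / 3) with hε'
  have hε'0 : 0 < ε' := lt_min (half_pos hε) (by positivity)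
  obtain ⟨δ, hδ, hK⟩ := exists_isClosed_superset hγ hγi hε'0
  obtain ⟨r, hr, hr1, hosc⟩ := exists_small_crosscut hd hi hb ha hδ (ρ := 1 / 2) (by norm_num)
  obtain ⟨x₀, B, hB, hKB, hBε, hCB⟩ := hK (closure (ψ '' (D ∩ sphere a r))) isClosed_closure (by
    have hcl : closure (ψ '' (D ∩ sphere a r)) ×ˢ closure (ψ '' (D ∩ sphere a r)) ⊆
        {p : ℂ × ℂ | dist p.1 p.2 ≤ δ} := by
      rw [← closure_prod_eq]
      refine closure_minimal ?_ (isClosed_le continuous_dist continuous_const)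
      rintro ⟨_, _⟩ ⟨⟨z, hz, rfl⟩, ⟨w, hw, rfl⟩⟩
      exact hosc z hz.1 w hw.1 hz.2 hw.2
    exact fun x hx y hy => hcl (mk_mem_prod hx hy))
  have hUo : IsOpen (ψ '' D) := by
    simpa using isOpen_image_of_conformal hd hi isOpen_univ
  have hCc : IsCompact (range γ) := isCompact_range hγ
  have hUC : Disjoint (ψ '' D) (range γ) := by
    rw [hγr]
    exact (disjoint_frontier_iff_isOpen.2 hUo).symm
  have hfr : frontier (ψ '' (D ∩ ball a r)) ⊆ range γ ∪ B := by
    refine (frontier_image_subset hd hi isOpen_ball).trans ?_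
    rw [← hγr, frontier_ball a hr.ne']
    exact union_subset_union_right _ (subset_closure.trans hKB)
  have hin : ψ '' (D ∩ ball a r) ⊆ closedBall x₀ ε' := by
    by_contra hcon
    obtain ⟨_, ⟨z, hz, rfl⟩, hzε⟩ := not_subset.1 hcon
    have hout : ∀ w ∈ D, r ≤ dist w a → ψ w ∈ closedBall x₀ ε' := by
      intro w hw hwr
      by_contra hwε
      refine false_of_frontier_subset ((convex_ball _ _).isPreconnected.image ψ hd.continuousOn) hCc
        hUC hB hBε hCB (hb.subset (image_mono inter_subset_left)) hfr ⟨z, hz, rfl⟩ ?_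
        ⟨z, hz.1, rfl⟩ ⟨w, hw, rfl⟩ hzε hwε
      rintro ⟨w', hw', hww⟩
      rw [hi hw'.1 hw hww] at hw'
      exact absurd hw'.2 (not_lt.2 hwr)
    have h1 := hout 0 h0D (by rw [dist_comm, dist_zero_right, ha]; linarith)
    have h2 := hout (-a / 2) haD (by
      rw [dist_eq_norm, show -a / 2 - a = (-3 / 2 : ℂ) * a by ring, norm_mul, ha]
      norm_num
      linarith)
    have h3 : dist (ψ 0) (ψ (-a / 2)) ≤ ε' + ε' :=
      (dist_triangle_right _ _ x₀).trans (add_le_add h1 h2)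
    have h4 : ε' ≤ _ := min_le_right _ _
    linarith
  refine ⟨r, hr, fun z hz w hw => ?_⟩
  have h3 : dist (ψ z) (ψ w) ≤ ε' + ε' := dist_triangle_right _ _ x₀ |>.trans
    (add_le_add (hin ⟨z, hz, rfl⟩) (hin ⟨w, hw, rfl⟩))
  have h4 : ε' ≤ _ := min_le_left _ _
  linarith

/-- **Carathéodory's theorem**, continuity part. -/
lemma exists_continuousOn_extension (hd : DifferentiableOn ℂ ψ (ball 0 1))
    (hi : InjOn ψ (ball 0 1)) (hb : IsBounded (ψ '' ball 0 1)) (hγ : Continuous γ)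
    (hγi : Function.Injective γ) (hγr : range γ = frontier (ψ '' ball 0 1)) :
    ∃ Ψ : ℂ → ℂ, ContinuousOn Ψ (closedBall 0 1) ∧ EqOn Ψ ψ (ball 0 1) := by
  have hcl : closure (ball (0 : ℂ) 1) = closedBall 0 1 := closure_ball _ one_ne_zero
  refine ⟨extendFrom (ball 0 1) ψ, continuousOn_extendFrom hcl.ge fun a ha => ?_, fun z hz =>
    extendFrom_eq (subset_closure hz) (hd.continuousOn z hz)⟩
  rcases (mem_closedBall_zero_iff.1 ha).lt_or_eq with h1 | h1
  · exact ⟨ψ a, hd.continuousOn a (by simpa using h1)⟩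
  · have : (𝓝[ball 0 1] a).NeBot := mem_closure_iff_nhdsWithin_neBot.1 (hcl ▸ ha)
    rw [← cauchy_map_iff_exists_tendsto, Metric.cauchy_iff]
    refine ⟨inferInstance, fun ε hε => ?_⟩
    obtain ⟨r, hr, h⟩ := exists_small_image_ball hd hi hb hγ hγi hγr h1 (half_pos hε)
    refine ⟨ψ '' (ball 0 1 ∩ ball a r), image_mem_map ?_, ?_⟩
    · exact inter_mem self_mem_nhdsWithin (mem_nhdsWithin_of_mem_nhds (ball_mem_nhds _ hr))
    · rintro _ ⟨z, hz, rfl⟩ _ ⟨w, hw, rfl⟩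
      exact (h z hz w hw).trans_lt (half_lt_self hε)

end conformal

end PlaneTopology

namespace PlaneTopology

open Set Filter Topology Metric Complex Bornology ComplexConjugate

/-- A holomorphic function on the disk that extends continuously by `0` to an open arc of the unit
circle vanishes at the origin. -/
lemma eq_zero_of_eqOn_arc {F : ℂ → ℂ} (hd : DifferentiableOn ℂ F (ball 0 1))
    (hc : ContinuousOn F (closedBall 0 1)) {O : Set ℂ} (hO : IsOpen O)
    (hne : (sphere 0 1 ∩ O).Nonempty) (hF : ∀ z ∈ sphere (0 : ℂ) 1 ∩ O, F z = 0) : F 0 = 0 := by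
  obtain ⟨u₀, hu₀, hu₀O⟩ := hne
  have hu₀n : ‖u₀‖ = 1 := by simpa using hu₀
  obtain ⟨t, ht⟩ := (isCompact_sphere (0 : ℂ) 1).elim_finite_subcover
    (fun u : Circle => (fun z : ℂ => u * z) ⁻¹' O) (fun u => hO.preimage (by fun_prop)) (by
      intro z hz
      have hzn : ‖z‖ = 1 := by simpa using hz
      have hz0 : z ≠ 0 := by
        rintro rfl
        simp at hzn
      refine mem_iUnion.2 ⟨⟨u₀ / z, mem_sphere_zero_iff_norm.2 (by simp [hu₀n, hzn])⟩, ?_⟩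
      simpa [hz0] using hu₀O)
  have hmaps : ∀ u : Circle, ∀ z : ℂ, ‖(u : ℂ) * z‖ = ‖z‖ := fun u z => by
    rw [norm_mul, Circle.norm_coe, one_mul]
  set G : ℂ → ℂ := fun z => ∏ u ∈ t, F (u * z) with hG
  have hGd : DiffContOnCl ℂ G (ball 0 1) := by
    constructor
    · refine DifferentiableOn.fun_finsetProd fun u _ => ?_
      refine hd.comp (by fun_prop) fun z hz => ?_
      rw [mem_ball_zero_iff, hmaps]
      simpa using hz
    · rw [closure_ball _ one_ne_zero]
      refine continuousOn_finsetProd _ fun u _ => ?_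
      refine hc.comp (by fun_prop) fun z hz => ?_
      rw [mem_closedBall_zero_iff, hmaps]
      simpa using hz
  have hG0 : ‖G 0‖ ≤ 0 := by
    refine norm_le_of_forall_mem_frontier_norm_le isBounded_ball hGd (fun z hz => ?_)
      (subset_closure (mem_ball_self one_pos))
    rw [frontier_ball _ one_ne_zero] at hz
    obtain ⟨u, hu⟩ := mem_iUnion.1 (ht hz)
    obtain ⟨hut, hu⟩ := mem_iUnion.1 hu
    rw [norm_le_zero_iff]
    refine Finset.prod_eq_zero hut (hF _ ⟨?_, hu⟩)
    rw [mem_sphere_zero_iff_norm, hmaps]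
    simpa using hz
  rw [norm_le_zero_iff] at hG0
  simp only [hG, mul_zero, Finset.prod_const] at hG0
  exact eq_zero_of_pow_eq_zero hG0

/-- The signed side of the line through `a` and `b` on which `z` lies. -/
noncomputable def side (a b z : ℂ) : ℝ := ((z - a) * conj (b - a)).im

section side

variable {a b : ℂ}

lemma continuous_side : Continuous (side a b) := by
  unfold side
  fun_prop

lemma side_swap (z : ℂ) : side b a z = -side a b z := by
  simp only [side, mul_im, sub_re, sub_im, conj_re, conj_im]
  ring

lemma convex_side_pos : Convex ℝ {z | 0 < side a b z} := by
  intro x hx y hy s t hs ht hst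
  simp only [mem_ofPred_eq] at *
  have h : side a b (s • x + t • y) = s * side a b x + t * side a b y := by
    have ht' : t = 1 - s := by linarith
    subst ht'
    simp only [side, mul_im, sub_re, sub_im, conj_re, conj_im, add_re, add_im, smul_re, smul_im,
      smul_eq_mul]
    ring
  rw [h]
  rcases hs.eq_or_lt with rfl | hs
  · have : t = 1 := by linarith
    subst this
    simpa using hy
  · have := mul_pos hs hx
    have := mul_nonneg ht hy.le
    linarith

lemma exists_side_pos (ha : ‖a‖ = 1) (hb : ‖b‖ = 1) (hab : a ≠ b) :
    ∃ u ∈ sphere (0 : ℂ) 1, 0 < side a b u := by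
  set d := b - a with hd
  have hd0 : d ≠ 0 := sub_ne_zero.2 hab.symm
  have hdn : 0 < ‖d‖ := norm_pos_iff.2 hd0
  refine ⟨I * d / ‖d‖, ?_, ?_⟩
  · simp [hdn.ne']
  · have ha2 : a.re * a.re + a.im * a.im = 1 := by
      rw [← normSq_apply, normSq_eq_norm_sq, ha, one_pow]
    have hb2 : b.re * b.re + b.im * b.im = 1 := by
      rw [← normSq_apply, normSq_eq_norm_sq, hb, one_pow]
    have hd2 : d.re * d.re + d.im * d.im = ‖d‖ ^ 2 := by
      rw [← normSq_apply, normSq_eq_norm_sq]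
    have hbr : b.re = a.re + d.re := by simp [hd]
    have hbi : b.im = a.im + d.im := by simp [hd]
    have hdot : a.re * d.re + a.im * d.im = -‖d‖ ^ 2 / 2 := by
      rw [hbr, hbi] at hb2
      linarith
    have hs : side a b (I * d / ‖d‖) = ‖d‖ - (a.im * d.re - a.re * d.im) := by
      rw [side, ← hd, sub_mul, sub_im]
      have : I * d / ‖d‖ * conj d = I * ‖d‖ := by
        rw [mul_div_assoc, mul_assoc, div_mul_eq_mul_div, mul_conj, normSq_eq_norm_sq]
        have : (‖d‖ : ℂ) ≠ 0 := by exact_mod_cast hdn.ne'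
        push_cast
        field_simp
      rw [this]
      simp only [mul_im, I_re, I_im, ofReal_re, ofReal_im, conj_re, conj_im]
      ring
    rw [hs, sub_pos]
    refine lt_of_pow_lt_pow_left₀ 2 hdn.le ?_
    have : (a.im * d.re - a.re * d.im) ^ 2 + (a.re * d.re + a.im * d.im) ^ 2 = ‖d‖ ^ 2 := by
      rw [← hd2, ← one_mul (d.re * d.re + d.im * d.im), ← ha2]
      ring
    rw [hdot] at this
    have : 0 < (-‖d‖ ^ 2 / 2) ^ 2 := by
      have : -‖d‖ ^ 2 / 2 ≠ 0 := by
        have := pow_pos hdn 2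
        intro h
        linarith
      positivity
    linarith

lemma eq_or_eq_of_side_eq_zero (ha : ‖a‖ = 1) (hb : ‖b‖ = 1) (hab : a ≠ b) {z : ℂ} (hz : ‖z‖ = 1)
    (h : side a b z = 0) : z = a ∨ z = b := by
  have hd0 : b - a ≠ 0 := sub_ne_zero.2 hab.symm
  have hn : ∀ z : ℂ, ‖z‖ = 1 → z.re * z.re + z.im * z.im = 1 := fun z hz => by
    rw [← normSq_apply, normSq_eq_norm_sq, hz, one_pow]
  obtain ⟨t, ht⟩ : ∃ t : ℝ, z = a + t * (b - a) := by
    refine ⟨((z - a) / (b - a)).re, ?_⟩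
    have : (((z - a) / (b - a)).re : ℂ) = (z - a) / (b - a) := by
      apply Complex.ext
      · simp
      · rw [ofReal_im, div_eq_mul_inv, inv_def, ← mul_assoc, im_mul_ofReal]
        rw [side] at h
        rw [h, zero_mul]
    rw [this, div_mul_cancel₀ _ hd0]
    ring
  have ha2 := hn a ha
  have hb2 := hn b hb
  have hz2 := hn z hz
  have hd2 : 0 < (b - a).re * (b - a).re + (b - a).im * (b - a).im := by
    rw [← normSq_apply]
    exact normSq_pos.2 hd0
  have key : t * (t - 1) * ((b - a).re * (b - a).re + (b - a).im * (b - a).im) = 0 := by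
    rw [ht] at hz2
    simp only [add_re, add_im, re_ofReal_mul, im_ofReal_mul, sub_re, sub_im] at hz2 ⊢
    linear_combination hz2 - (1 - t) * ha2 - t * hb2
  rcases mul_eq_zero.1 ((mul_eq_zero.1 key).resolve_right hd2.ne') with h0 | h1
  · left
    rw [ht, h0]
    simp
  · right
    rw [ht, sub_eq_zero.1 h1]
    simp

end side

section boundary

variable {ψ Ψ : ℂ → ℂ}

lemma mapsTo_frontier (hd : DifferentiableOn ℂ ψ (ball 0 1)) (hi : InjOn ψ (ball 0 1))
    (hΨ : ContinuousOn Ψ (closedBall 0 1)) (hΨψ : EqOn Ψ ψ (ball 0 1)) :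
    MapsTo Ψ (sphere 0 1) (frontier (ψ '' ball 0 1)) := by
  intro a ha
  have hUo : IsOpen (ψ '' ball 0 1) := by
    simpa using isOpen_image_of_conformal hd hi isOpen_univ
  have hcl : closure (ball (0 : ℂ) 1) = closedBall 0 1 := closure_ball _ one_ne_zero
  have hacl : a ∈ closure (ball (0 : ℂ) 1) := hcl ▸ sphere_subset_closedBall ha
  have hnb : (𝓝[ball 0 1] a).NeBot := mem_closure_iff_nhdsWithin_neBot.1 hacl
  have ht : Tendsto ψ (𝓝[ball 0 1] a) (𝓝 (Ψ a)) := by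
    have := (hΨ a (sphere_subset_closedBall ha)).mono ball_subset_closedBall
    refine this.tendsto.congr' ?_
    filter_upwards [self_mem_nhdsWithin] with z hz using hΨψ hz
  rw [hUo.frontier_eq]
  refine ⟨mem_closure_of_tendsto ht ?_, ?_⟩
  · filter_upwards [self_mem_nhdsWithin] with z hz using mem_image_of_mem ψ hz
  · rintro ⟨z, hz, hza⟩
    rw [mem_ball_zero_iff] at hz
    obtain ⟨s, hzs, hs1⟩ := exists_between hz
    have hev := ht.eventually ((isOpen_image_of_conformal hd hi (isOpen_ball (x := 0) (ε := s)))
      |>.mem_nhds ⟨z, ⟨by simpa using hz, by simpa using hzs⟩, hza⟩)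
    have han : ‖a‖ = 1 := by simpa using ha
    have hfar : ∀ᶠ w in 𝓝[ball 0 1] a, s < ‖w‖ :=
      (continuous_norm.tendsto a |>.mono_left nhdsWithin_le_nhds).eventually
        (lt_mem_nhds (by rwa [han]))
    obtain ⟨w, ⟨w', hw', hww⟩, hws, hwD⟩ :=
      (hev.and (hfar.and self_mem_nhdsWithin)).exists
    rw [hi hw'.1 hwD hww] at hw'
    have := hw'.2
    rw [mem_ball_zero_iff] at this
    linarith

variable {γ : Circle → ℂ}

/-- **Carathéodory's theorem**, injectivity part. -/
lemma injOn_sphere (hd : DifferentiableOn ℂ ψ (ball 0 1)) (hi : InjOn ψ (ball 0 1))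
    (hb : IsBounded (ψ '' ball 0 1)) (hγ : Continuous γ) (hγi : Function.Injective γ)
    (hγr : range γ = frontier (ψ '' ball 0 1)) (hΨ : ContinuousOn Ψ (closedBall 0 1))
    (hΨψ : EqOn Ψ ψ (ball 0 1)) : InjOn Ψ (sphere 0 1) := by
  intro a ha b hb' hab
  by_contra hne
  have han : ‖a‖ = 1 := by simpa using ha
  have hbn : ‖b‖ = 1 := by simpa using hb'
  have hmaps := mapsTo_frontier hd hi hΨ hΨψ
  have hUo : IsOpen (ψ '' ball 0 1) := by
    simpa using isOpen_image_of_conformal hd hi isOpen_univ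
  have hUc : IsPreconnected (ψ '' ball 0 1) :=
    (convex_ball _ _).isPreconnected.image ψ hd.continuousOn
  have hcl : closure (ball (0 : ℂ) 1) = closedBall 0 1 := closure_ball _ one_ne_zero
  have hCc : IsCompact (range γ) := isCompact_range hγ
  have hUC : Disjoint (ψ '' ball 0 1) (range γ) := by
    rw [hγr]
    exact (disjoint_frontier_iff_isOpen.2 hUo).symm
  set x := Ψ a with hx
  have hxC : x ∈ range γ := hγr ▸ hmaps ha
  have hside : ∀ c d : ℂ, ‖c‖ = 1 → ‖d‖ = 1 → c ≠ d →
      (∃ z ∈ ball (0 : ℂ) 1, 0 < side c d z) ∧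
      IsPreconnected (ψ '' (ball 0 1 ∩ {z | 0 < side c d z}) ∪ range γ \ {x}) := by
    intro c d hc hd' hcd
    have ho : IsOpen {z | 0 < side c d z} := isOpen_lt continuous_const continuous_side
    obtain ⟨u, hu, hux⟩ : ∃ u ∈ sphere (0 : ℂ) 1 ∩ {z | 0 < side c d z}, Ψ u ≠ x := by
      by_contra! hcon
      have h0 := eq_zero_of_eqOn_arc (F := fun z => Ψ z - x)
        ((hd.congr hΨψ).sub_const x) (hΨ.sub continuousOn_const) ho
        (exists_side_pos hc hd' hcd) (fun z hz => sub_eq_zero.2 (hcon z hz))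
      have h1 : x ∈ ψ '' ball 0 1 :=
        ⟨0, mem_ball_self one_pos, by rw [← hΨψ (mem_ball_self one_pos)]; exact sub_eq_zero.1 h0⟩
      exact hUC.le_bot ⟨h1, hxC⟩
    have hucl : u ∈ closure (ball (0 : ℂ) 1 ∩ {z | 0 < side c d z}) := by
      have := ho.inter_closure ⟨hu.2, hcl.symm ▸ sphere_subset_closedBall hu.1⟩
      rwa [inter_comm] at this
    have hΨcl : Ψ u ∈ closure (ψ '' (ball 0 1 ∩ {z | 0 < side c d z})) := by
      have h1 : ψ '' (ball 0 1 ∩ {z | 0 < side c d z}) = Ψ '' (ball 0 1 ∩ {z | 0 < side c d z}) :=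
        image_congr fun z hz => (hΨψ hz.1).symm
      rw [h1]
      exact ((hΨ u (sphere_subset_closedBall hu.1)).mono
        (inter_subset_left.trans ball_subset_closedBall)).mem_closure_image hucl
    refine ⟨?_, ?_⟩
    · obtain ⟨z, hz⟩ := closure_nonempty_iff.1 ⟨u, hucl⟩
      exact ⟨z, hz⟩
    · have hS : IsPreconnected (ψ '' (ball 0 1 ∩ {z | 0 < side c d z})) :=
        (((convex_ball _ _).inter convex_side_pos).isPreconnected).image ψ
          (hd.continuousOn.mono inter_subset_left)
      have hS' := hS.subset_closure (subset_insert (Ψ u) _)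
        (insert_subset hΨcl subset_closure)
      have huC : Ψ u ∈ range γ \ {x} := ⟨hγr ▸ hmaps hu.1, hux⟩
      have := hS'.union (Ψ u) (mem_insert _ _) huC
        (isPreconnected_range_diff_singleton hγ hγi hxC)
      rwa [insert_union, insert_eq_of_mem (mem_union_right _ huC)] at this
  obtain ⟨⟨p, hpD, hp⟩, hT1⟩ := hside a b han hbn hne
  obtain ⟨⟨q, hqD, hq⟩, hT2⟩ := hside b a hbn han (Ne.symm hne)
  have hCne : (range γ \ {x}).Nonempty := by
    obtain ⟨t, ht⟩ := hxC
    refine ⟨γ (-t), mem_range_self _, fun h => ?_⟩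
    have h2 : -t = t := hγi (h.trans ht.symm)
    have h3 : (t : ℂ) = 0 := by
      have := congrArg (fun s : Circle => (s : ℂ)) h2
      simp only [Circle.coe_neg] at this
      exact neg_eq_self.1 this
    exact t.coe_ne_zero h3
  set Γ := Ψ '' (closedBall 0 1 ∩ {z | side a b z = 0}) with hΓ
  have hΓc : IsCompact Γ := ((isCompact_closedBall (0 : ℂ) 1).inter_right
    (isClosed_eq continuous_side continuous_const)).image_of_continuousOn
      (hΨ.mono inter_subset_left)
  have hΓC : ∀ y ∈ Γ, y ∈ range γ → y = x := by
    rintro _ ⟨z, ⟨hz, hz0⟩, rfl⟩ hzC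
    rcases (mem_closedBall_zero_iff.1 hz).lt_or_eq with h1 | h1
    · have h2 : z ∈ ball (0 : ℂ) 1 := by simpa using h1
      exact absurd ⟨⟨z, h2, (hΨψ h2).symm⟩, hzC⟩ fun h => hUC.le_bot h
    · rcases eq_or_eq_of_side_eq_zero han hbn hne h1 hz0 with rfl | rfl
      · rfl
      · exact hab.symm
  have hΓψ : ∀ z ∈ ball (0 : ℂ) 1, ψ z ∈ Γ → side a b z = 0 := by
    rintro z hz ⟨w, ⟨hw, hw0⟩, hwz⟩
    rcases (mem_closedBall_zero_iff.1 hw).lt_or_eq with h1 | h1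
    · have h2 : w ∈ ball (0 : ℂ) 1 := by simpa using h1
      rw [hΨψ h2] at hwz
      rwa [← hi h2 hz hwz]
    · have h2 : Ψ w ∈ range γ := hγr ▸ hmaps (by simpa using h1)
      rw [hwz] at h2
      exact absurd ⟨⟨z, hz, rfl⟩, h2⟩ fun h => hUC.le_bot h
  obtain ⟨y, hy⟩ := hCne
  have hT := hT1.union y (Or.inr hy) (Or.inr hy) hT2
  have hTΓ : Disjoint ((ψ '' (ball 0 1 ∩ {z | 0 < side a b z}) ∪ range γ \ {x}) ∪
      (ψ '' (ball 0 1 ∩ {z | 0 < side b a z}) ∪ range γ \ {x})) Γ := by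
    rw [Set.disjoint_left]
    rintro _ ((⟨z, ⟨hz, hzs⟩, rfl⟩ | ⟨h1, h2⟩) | (⟨z, ⟨hz, hzs⟩, rfl⟩ | ⟨h1, h2⟩)) hyΓ
    · have h3 := hΓψ z hz hyΓ
      rw [mem_ofPred_eq] at hzs
      linarith
    · exact h2 (hΓC _ hyΓ h1)
    · have h3 := hΓψ z hz hyΓ
      rw [mem_ofPred_eq, side_swap] at hzs
      linarith
    · exact h2 (hΓC _ hyΓ h1)
  have hlogΓ := hasLog_div_of_isPreconnected hΓc hT hTΓ (Or.inl (Or.inl ⟨p, ⟨hpD, hp⟩, rfl⟩))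
    (Or.inr (Or.inl ⟨q, ⟨hqD, hq⟩, rfl⟩))
  have hlogC := hasLog_div_of_isPreconnected hCc hUc hUC ⟨p, hpD, rfl⟩ ⟨q, hqD, rfl⟩
  have hCΓ : IsPreconnected (range γ ∩ Γ) := by
    refine Set.Subsingleton.isPreconnected fun y hy z hz => ?_
    rw [hΓC y hy.2 hy.1, hΓC z hz.2 hz.1]
  refine not_hasLog_of_frontier_subset (V := ψ '' (ball 0 1 ∩ {z | 0 < side a b z}))
    (hCc.isClosed.union hΓc.isClosed) (hb.subset (image_mono inter_subset_left)) ?_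
    ⟨p, ⟨hpD, hp⟩, rfl⟩ ?_ ?_ (HasLog.union hCc.isClosed hΓc.isClosed hCΓ hlogC hlogΓ)
  · refine (frontier_image_subset hd hi (isOpen_lt continuous_const continuous_side)).trans ?_
    rw [← hγr]
    refine union_subset_union_right _ ?_
    rintro _ ⟨z, ⟨hz, hzf⟩, rfl⟩
    exact ⟨z, ⟨ball_subset_closedBall hz,
      (frontier_lt_subset_eq continuous_const continuous_side hzf).symm⟩, hΨψ hz⟩
  · rintro ⟨z, ⟨hz, hzs⟩, hzq⟩
    rw [hi hz hqD hzq, mem_ofPred_eq] at hzs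
    rw [side_swap] at hq
    linarith
  · rintro (h | h)
    · exact hUC.le_bot ⟨⟨q, hqD, rfl⟩, h⟩
    · have h3 := hΓψ q hqD h
      rw [side_swap] at hq
      linarith

/-- **Carathéodory's theorem**. -/
theorem nonempty_homeomorph_closure_image (hd : DifferentiableOn ℂ ψ (ball 0 1))
    (hi : InjOn ψ (ball 0 1)) (hb : IsBounded (ψ '' ball 0 1)) (hγ : Continuous γ)
    (hγi : Function.Injective γ) (hγr : range γ = frontier (ψ '' ball 0 1)) :
    Nonempty (closure (ψ '' ball 0 1) ≃ₜ closedBall (0 : ℂ) 1) := by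
  obtain ⟨Ψ, hΨ, hΨψ⟩ := exists_continuousOn_extension hd hi hb hγ hγi hγr
  have hcl : closure (ball (0 : ℂ) 1) = closedBall 0 1 := closure_ball _ one_ne_zero
  have hUo : IsOpen (ψ '' ball 0 1) := by
    simpa using isOpen_image_of_conformal hd hi isOpen_univ
  have himg : Ψ '' closedBall 0 1 = closure (ψ '' ball 0 1) := by
    rw [← hΨψ.image_eq]
    refine Subset.antisymm ?_ (closure_minimal (image_mono ball_subset_closedBall)
      ((isCompact_closedBall (0 : ℂ) 1).image_of_continuousOn hΨ).isClosed)
    rw [← hcl] at hΨ ⊢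
    exact hΨ.image_closure
  have hmaps := mapsTo_frontier hd hi hΨ hΨψ
  have hmix : ∀ z ∈ ball (0 : ℂ) 1, ∀ w ∈ sphere (0 : ℂ) 1, Ψ z ≠ Ψ w := by
    intro z hz w hw h
    have h1 := hmaps hw
    rw [← h, hΨψ hz, hUo.frontier_eq] at h1
    exact h1.2 ⟨z, hz, rfl⟩
  have hinj : InjOn Ψ (closedBall 0 1) := by
    intro z hz w hw h
    rw [← ball_union_sphere] at hz hw
    rcases hz with hz | hz <;> rcases hw with hw | hw
    · rw [hΨψ hz, hΨψ hw] at h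
      exact hi hz hw h
    · exact absurd h (hmix z hz w hw)
    · exact absurd h.symm (hmix w hw z hz)
    · exact injOn_sphere hd hi hb hγ hγi hγr hΨ hΨψ hz hw h
  have : CompactSpace (closedBall (0 : ℂ) 1) :=
    isCompact_iff_compactSpace.1 (isCompact_closedBall 0 1)
  have hbij := hinj.bijOn_image
  rw [himg] at hbij
  exact ⟨(Continuous.homeoOfEquivCompactToT2 (f := hbij.equiv Ψ)
    (hΨ.mapsToRestrict hbij.mapsTo)).symm⟩

end boundary

end PlaneTopology

namespace PlaneTopology

open Set Filter Topology Metric Complex Bornology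

/-- Bounded plane domains whose complement is connected and whose frontier is a Jordan curve have
closures homeomorphic to the closed disk. -/
theorem nonempty_homeomorph_closedBall {U : Set ℂ} (hU : IsOpen U) (hUc : IsConnected U)
    (hb : IsBounded U) (hUcc : IsPreconnected Uᶜ) (hreg : interior (closure U) ⊆ U)
    {γ : Circle → ℂ} (hγ : Continuous γ) (hγi : Function.Injective γ)
    (hγr : range γ = frontier U) : Nonempty (closure U ≃ₜ closedBall (0 : ℂ) 1) := by
  obtain ⟨ψ, hd, hi, rfl⟩ := exists_riemann_map hU hUc hb hUcc hreg
  exact nonempty_homeomorph_closure_image hd hi hb hγ hγi hγr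

section arcs

variable {X : Type*} {f g : unitInterval → X}

/-- The parameter `t ∈ [0, 1]` of the point of the unit circle with real part `cos (π t)`. -/
noncomputable def arcParam (u : Circle) : unitInterval :=
  ⟨Real.arccos (u : ℂ).re / Real.pi, div_nonneg (Real.arccos_nonneg _) Real.pi_pos.le,
    div_le_one_of_le₀ (Real.arccos_le_pi _) Real.pi_pos.le⟩

lemma continuous_arcParam : Continuous arcParam := by
  unfold arcParam
  fun_prop

lemma cos_arcParam (u : Circle) : Real.cos (Real.pi * arcParam u) = (u : ℂ).re := by
  have h : |(u : ℂ).re| ≤ 1 := (abs_re_le_norm _).trans (Circle.norm_coe u).le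
  rw [arcParam, mul_div_cancel₀ _ Real.pi_pos.ne', Real.cos_arccos (abs_le.1 h).1 (abs_le.1 h).2]

lemma arcParam_eq {u : Circle} {t : unitInterval} (h : (u : ℂ).re = Real.cos (Real.pi * t)) :
    arcParam u = t := by
  have hπ := Real.pi_pos
  apply Subtype.ext
  change Real.arccos (u : ℂ).re / Real.pi = t
  rw [h, Real.arccos_cos (mul_nonneg hπ.le t.2.1) (mul_le_of_le_one_right hπ.le t.2.2),
    mul_div_cancel_left₀ _ hπ.ne']

lemma re_sq_add_im_sq (u : Circle) : (u : ℂ).re ^ 2 + (u : ℂ).im ^ 2 = 1 := by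
  have := u.normSq_coe
  rw [normSq_apply] at this
  linarith

lemma arcParam_eq_zero_or_one_of_im_eq_zero {u : Circle} (h : (u : ℂ).im = 0) :
    arcParam u = 0 ∨ arcParam u = 1 := by
  have h1 := re_sq_add_im_sq u
  rw [h, zero_pow two_ne_zero, add_zero, sq, mul_self_eq_one_iff] at h1
  exact h1.imp (fun h2 => arcParam_eq (by simpa using h2))
    fun h2 => arcParam_eq (by simpa using h2)

lemma im_eq_zero_of_arcParam {u : Circle} (h : arcParam u = 0 ∨ arcParam u = 1) :
    (u : ℂ).im = 0 := by
  have h1 := re_sq_add_im_sq u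
  rw [← cos_arcParam] at h1
  rcases h with h | h <;> simpa [h] using h1

open Classical in
/-- The closed curve running through `f` on the upper and `g` on the lower half circle. -/
noncomputable def gluedArcs (f g : unitInterval → X) (u : Circle) : X :=
  if 0 ≤ (u : ℂ).im then f (arcParam u) else g (arcParam u)

lemma continuous_gluedArcs [TopologicalSpace X] (hf : Continuous f) (hg : Continuous g)
    (h0 : f 0 = g 0) (h1 : f 1 = g 1) : Continuous (gluedArcs f g) := by
  refine Continuous.if_le (hf.comp continuous_arcParam) (hg.comp continuous_arcParam)
    continuous_const (by fun_prop) fun u hu => ?_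
  rcases arcParam_eq_zero_or_one_of_im_eq_zero hu.symm with h | h
  · simpa [h] using h0
  · simpa [h] using h1

lemma injective_gluedArcs (hf : Function.Injective f) (hg : Function.Injective g)
    (h0 : f 0 = g 0) (h1 : f 1 = g 1) (hfg : range f ∩ range g ⊆ {f 0, f 1}) :
    Function.Injective (gluedArcs f g) := by
  have hre : ∀ u v : Circle, arcParam u = arcParam v → (u : ℂ).re = (v : ℂ).re := fun u v h => by
    rw [← cos_arcParam, h, cos_arcParam]
  have him : ∀ u v : Circle, arcParam u = arcParam v → |(u : ℂ).im| = |(v : ℂ).im| :=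
    fun u v h => by
      rw [← sq_eq_sq_iff_abs_eq_abs]
      have h2 := re_sq_add_im_sq u
      rw [hre u v h, ← re_sq_add_im_sq v] at h2
      exact add_left_cancel h2
  have hmix : ∀ u v : Circle, 0 ≤ (u : ℂ).im → (v : ℂ).im < 0 →
      f (arcParam u) ≠ g (arcParam v) := by
    intro u v _ hv h
    refine hv.ne (im_eq_zero_of_arcParam ?_)
    rcases hfg ⟨⟨_, h⟩, mem_range_self _⟩ with h2 | h2
    · exact Or.inl (hg (h2.trans h0))
    · exact Or.inr (hg (h2.trans h1))
  intro u v huv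
  unfold gluedArcs at huv
  split_ifs at huv with hu hv hv
  · have h := hf huv
    have h2 := him u v h
    rw [abs_of_nonneg hu, abs_of_nonneg hv] at h2
    exact Circle.ext (Complex.ext (hre u v h) h2)
  · exact absurd huv (hmix u v hu (not_le.1 hv))
  · exact absurd huv.symm (hmix v u hv (not_le.1 hu))
  · have h := hg huv
    have h2 := him u v h
    rw [abs_of_neg (not_le.1 hu), abs_of_neg (not_le.1 hv), neg_inj] at h2
    exact Circle.ext (Complex.ext (hre u v h) h2)

lemma range_gluedArcs (h0 : f 0 = g 0) (h1 : f 1 = g 1) :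
    range (gluedArcs f g) = range f ∪ range g := by
  have hπ := Real.pi_pos
  refine Subset.antisymm ?_ (union_subset ?_ ?_)
  · rintro _ ⟨u, rfl⟩
    unfold gluedArcs
    split_ifs
    · exact Or.inl (mem_range_self _)
    · exact Or.inr (mem_range_self _)
  · rintro _ ⟨t, rfl⟩
    refine ⟨Circle.exp (Real.pi * t), ?_⟩
    have him : 0 ≤ (Circle.exp (Real.pi * t) : ℂ).im := by
      rw [Circle.coe_exp, exp_ofReal_mul_I_im]
      exact Real.sin_nonneg_of_nonneg_of_le_pi (mul_nonneg hπ.le t.2.1)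
        (mul_le_of_le_one_right hπ.le t.2.2)
    rw [gluedArcs, if_pos him, arcParam_eq]
    rw [Circle.coe_exp, exp_ofReal_mul_I_re]
  · rintro _ ⟨t, rfl⟩
    refine ⟨Circle.exp (-(Real.pi * t)), ?_⟩
    have hre : arcParam (Circle.exp (-(Real.pi * t))) = t := by
      rw [arcParam_eq]
      rw [Circle.coe_exp, exp_ofReal_mul_I_re, Real.cos_neg]
    have him : (Circle.exp (-(Real.pi * t)) : ℂ).im ≤ 0 := by
      rw [Circle.coe_exp, exp_ofReal_mul_I_im, Real.sin_neg, neg_nonpos]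
      exact Real.sin_nonneg_of_nonneg_of_le_pi (mul_nonneg hπ.le t.2.1)
        (mul_le_of_le_one_right hπ.le t.2.2)
    unfold gluedArcs
    split_ifs with h
    · rcases arcParam_eq_zero_or_one_of_im_eq_zero (him.antisymm h) with h2 | h2
      · rw [h2]
        rw [hre] at h2
        rw [h2, h0]
      · rw [h2]
        rw [hre] at h2
        rw [h2, h1]
    · rw [hre]

end arcs

section transport

variable {E : Type*} [NormedAddCommGroup E] [InnerProductSpace ℝ E]

lemma nonempty_circle_homeomorph_sphere (e : ℂ ≃ₗᵢ[ℝ] E) : Nonempty (Circle ≃ₜ sphere (0 : E) 1) :=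
  ⟨(e.toHomeomorph.image (sphere (0 : ℂ) 1)).trans
    (Homeomorph.setCongr (by
      change e '' _ = _
      rw [e.image_sphere, map_zero]))⟩

lemma nonempty_homeomorph_closedBall_of_linearIsometryEquiv (e : ℂ ≃ₗᵢ[ℝ] E) {U : Set E}
    (hU : IsOpen U) (hUc : IsConnected U) (hb : IsBounded U) (hUcc : IsPreconnected Uᶜ)
    (hreg : interior (closure U) ⊆ U) {γ : Circle → E} (hγ : Continuous γ)
    (hγi : Function.Injective γ) (hγr : range γ = frontier U) :
    Nonempty (closure U ≃ₜ closedBall (0 : E) 1) := by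
  set h : E ≃ₜ ℂ := e.symm.toHomeomorph with hh
  obtain ⟨k⟩ := nonempty_homeomorph_closedBall (U := h '' U) (h.isOpen_image.2 hU)
    (hUc.image h h.continuous.continuousOn) (e.symm.lipschitz.isBounded_image hb)
    (by rw [← h.image_compl]; exact hUcc.image h h.continuous.continuousOn)
    (by rw [← h.image_closure, ← h.image_interior]; exact image_mono hreg)
    (h.continuous.comp hγ) (h.injective.comp hγi)
    (by rw [range_comp, hγr, h.image_frontier])
  exact ⟨((h.image (closure U)).trans (Homeomorph.setCongr (h.image_closure U))).trans
    (k.trans ((e.toHomeomorph.image (closedBall (0 : ℂ) 1)).trans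
      (Homeomorph.setCongr (by
        change e '' _ = _
        rw [e.image_closedBall, map_zero]))))⟩

end transport

end PlaneTopology

/-- If the plane decomposes as `U₁ ∪ U₂ ∪ C` with `U₁` bounded and `U₂` unbounded disjoint
open connected sets, `C = ∂U₁ = ∂U₂` compact, every point of `C` accessible from both sides,
and `C` is the union of two arcs meeting exactly in their two common endpoints, then `C` is
homeomorphic to the circle and the closure of `U₁` is homeomorphic to the closed disk. -/
theorem circle_and_disk_of_two_arcs
    (U₁ U₂ C : Set (EuclideanSpace ℝ (Fin 2)))
    (hcover : Set.univ = U₁ ∪ U₂ ∪ C) (hdisj : Disjoint U₁ U₂)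
    (ho₁ : IsOpen U₁) (ho₂ : IsOpen U₂)
    (hc₁ : IsConnected U₁) (hc₂ : IsConnected U₂)
    (hb₁ : Bornology.IsBounded U₁) (hb₂ : ¬ Bornology.IsBounded U₂)
    (hC : IsCompact C) (hf₁ : C = frontier U₁) (hf₂ : C = frontier U₂)
    (hacc₁ : ∀ x ∈ C, Accessible U₁ x) (hacc₂ : ∀ x ∈ C, Accessible U₂ x)
    (K₁ K₂ : Set (EuclideanSpace ℝ (Fin 2)))
    (f g : unitInterval → EuclideanSpace ℝ (Fin 2))
    (hfc : Continuous f) (hfi : Function.Injective f) (hfr : Set.range f = K₁)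
    (hgc : Continuous g) (hgi : Function.Injective g) (hgr : Set.range g = K₂)
    (hends0 : f 0 = g 0) (hends1 : f 1 = g 1) (hendsne : f 0 ≠ f 1)
    (hunion : C = K₁ ∪ K₂) (hinter : K₁ ∩ K₂ = {f 0, f 1}) :
    Nonempty (C ≃ₜ Metric.sphere (0 : EuclideanSpace ℝ (Fin 2)) 1) ∧
    Nonempty ((closure U₁) ≃ₜ Metric.closedBall (0 : EuclideanSpace ℝ (Fin 2)) 1) := by
  have hrange : Set.range (PlaneTopology.gluedArcs f g) = C := by
    rw [PlaneTopology.range_gluedArcs hends0 hends1, hfr, hgr, hunion]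
  have hcont := PlaneTopology.continuous_gluedArcs hfc hgc hends0 hends1
  have hinj := PlaneTopology.injective_gluedArcs hfi hgi hends0 hends1
    (by rw [hfr, hgr, hinter])
  have hcompl : U₁ᶜ = closure U₂ := by
    rw [closure_eq_self_union_frontier, ← hf₂]
    refine Set.Subset.antisymm (fun x hx => ?_) (Set.union_subset ?_ ?_)
    · have hx' : x ∈ U₁ ∪ U₂ ∪ C := hcover ▸ Set.mem_univ x
      rw [Set.union_assoc] at hx'
      exact hx'.resolve_left hx
    · exact hdisj.subset_compl_left
    · rw [hf₁]
      exact (disjoint_frontier_iff_isOpen.2 ho₁).subset_compl_right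
  refine ⟨?_, PlaneTopology.nonempty_homeomorph_closedBall_of_linearIsometryEquiv
    Complex.orthonormalBasisOneI.repr ho₁ hc₁ hb₁ ?_ ?_ hcont hinj (hrange.trans hf₁)⟩
  · obtain ⟨k⟩ := PlaneTopology.nonempty_circle_homeomorph_sphere
      Complex.orthonormalBasisOneI.repr
    have hemb := (hcont.isClosedEmbedding hinj).isEmbedding
    exact ⟨(Homeomorph.setCongr hrange.symm).trans (hemb.toHomeomorph.symm.trans k)⟩
  · rw [hcompl]
    exact hc₂.isPreconnected.closure
  · intro x hx
    by_contra hxU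
    have hxcl : x ∈ closure U₂ := hcompl ▸ hxU
    obtain ⟨y, hy, hy₂⟩ := mem_closure_iff.1 hxcl _ isOpen_interior hx
    obtain ⟨z, hz₂, hz₁⟩ := mem_closure_iff.1 (interior_subset hy) _ ho₂ hy₂
    exact hdisj.le_bot ⟨hz₁, hz₂⟩
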